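/- arXiv:2512.13548 — 8 statements merged into one kernel-verified Lean document; each statement's English description precedes it below -/
import Mathlib

section
/- For every constant threshold setting there exists a low-degree polynomial approximating the shifted sign function: there is a constant C > 0 such that for all η, Δ ∈ (0, 1/2) and all c ∈ [-1, 1], there exists a real polynomial P of degree at most ⌈C · (1/Δ) · log(1/η)⌉ satisfying |P(x)| ≤ 1 for all x ∈ [-1, 1], P(x) ∈ [1-η, 1] for all x ∈ [-1, c - Δ/2], and P(x) ∈ [-η, η] for all x ∈ [c + Δ/2, 1]. -/
/-!
Dividing the odd Chebyshev polynomial `T₂ₙ₊₁` by `X` and squaring gives a kernel of degree `4n` that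
is at most `t⁻²` on `[-1, 1]`, while `|sin (m φ)| ≥ (2 / π) m φ` for `m φ ≤ π / 2` makes it at least
`(2 (2n+1) / π)²` on `(0, 1 / (2n+1)]`. Its mass therefore grows like `n`, but the mass at distance
`δ` from the origin stays below `1 / δ`. Integrating with `n` of order `1 / δ` gives a step with
constant error. Composing with the probability that the majority of `2m+1` coin tosses show heads
makes the error exponentially small in `m`, so that `m` of order `log (1 / η)` is enough.
-/

open Polynomial Set

/-- `P` approximates on `[-1, 1]` the step function that jumps from `1` to `0` at `c`, with values
in `[0, 1]` and error at most `ε` at distance at least `δ` from the jump. -/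
structure ApproximatesStep (P : ℝ[X]) (c δ ε : ℝ) : Prop where
  eval_mem_Icc : ∀ x ∈ Icc (-1 : ℝ) 1, P.eval x ∈ Icc (0 : ℝ) 1
  one_sub_le_eval : ∀ x ∈ Icc (-1 : ℝ) 1, x ≤ c - δ → 1 - ε ≤ P.eval x
  eval_le : ∀ x ∈ Icc (-1 : ℝ) 1, c + δ ≤ x → P.eval x ≤ ε

/-! ### Steps from kernels -/

lemma exists_derivative_eq {k : Type*} [Field k] [CharZero k] (K : k[X]) :
    ∃ F : k[X], derivative F = K ∧ F.natDegree ≤ K.natDegree + 1 := by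
  refine ⟨∑ i ∈ Finset.range (K.natDegree + 1), monomial (i + 1) (K.coeff i / (i + 1)), ?_, ?_⟩
  · rw [derivative_sum]
    conv_rhs => rw [K.as_sum_range]
    refine Finset.sum_congr rfl fun i _ => ?_
    rw [derivative_monomial, Nat.add_sub_cancel, Nat.cast_succ,
      div_mul_cancel₀ _ (Nat.cast_add_one_ne_zero i)]
  · exact natDegree_sum_le_of_forall_le _ _ fun i hi =>
      (natDegree_monomial_le _).trans (Finset.mem_range.1 hi)

lemma exists_eval_eq_integral (K : ℝ[X]) (b : ℝ) :
    ∃ F : ℝ[X], F.natDegree ≤ K.natDegree + 1 ∧ ∀ x, F.eval x = ∫ t in x..b, K.eval t := by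
  obtain ⟨F, rfl, hdeg⟩ := exists_derivative_eq K
  refine ⟨C (F.eval b) - F, ?_, fun x => ?_⟩
  · exact (natDegree_sub_le _ _).trans (by simpa using hdeg)
  · rw [intervalIntegral.integral_eq_sub_of_hasDerivAt (fun t _ => F.hasDerivAt t)
      (F.derivative.continuous.intervalIntegrable x b), eval_sub, eval_C]

lemma exists_approximatesStep_of_kernel {K : ℝ[X]} {δ ε : ℝ}
    (hK : ∀ t ∈ Icc (-1 : ℝ) 1, 0 ≤ K.eval t) (hmass : 0 < ∫ t in (-1)..1, K.eval t)
    (hleft : ∀ x ∈ Icc (-1 : ℝ) 1, x ≤ -δ →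
      ∫ t in (-1)..x, K.eval t ≤ ε * ∫ t in (-1)..1, K.eval t)
    (hright : ∀ x ∈ Icc (-1 : ℝ) 1, δ ≤ x →
      ∫ t in x..1, K.eval t ≤ ε * ∫ t in (-1)..1, K.eval t) :
    ∃ P : ℝ[X], P.natDegree ≤ K.natDegree + 1 ∧ ApproximatesStep P 0 δ ε := by
  obtain ⟨F, hdeg, hF⟩ := exists_eval_eq_integral K 1
  set M := ∫ t in (-1)..1, K.eval t
  have hsplit (x : ℝ) : (∫ t in (-1)..x, K.eval t) + ∫ t in x..1, K.eval t = M :=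
    intervalIntegral.integral_add_adjacent_intervals
      (K.continuous.intervalIntegrable _ _) (K.continuous.intervalIntegrable _ _)
  have heval (x : ℝ) : (C M⁻¹ * F).eval x = (∫ t in x..1, K.eval t) / M := by
    rw [eval_mul, eval_C, hF, inv_mul_eq_div]
  refine ⟨C M⁻¹ * F, (natDegree_C_mul_le _ _).trans hdeg, fun x hx => ?_, fun x hx hxδ => ?_,
    fun x hx hxδ => ?_⟩
  · have hbefore : 0 ≤ ∫ t in (-1)..x, K.eval t :=
      intervalIntegral.integral_nonneg hx.1 fun t ht => hK t ⟨ht.1, ht.2.trans hx.2⟩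
    have hafter : 0 ≤ ∫ t in x..1, K.eval t :=
      intervalIntegral.integral_nonneg hx.2 fun t ht => hK t ⟨hx.1.trans ht.1, ht.2⟩
    rw [heval]
    exact ⟨div_nonneg hafter hmass.le, (div_le_one hmass).2 (by linarith [hsplit x])⟩
  · rw [heval, le_div_iff₀ hmass]
    linarith [hsplit x, hleft x hx (by linarith)]
  · rw [heval, div_le_iff₀ hmass]
    exact hright x hx (by linarith)

/-! ### The Chebyshev kernel -/

lemma eval_T_odd_sin (n : ℕ) (φ : ℝ) :
    (Chebyshev.T ℝ (2 * n + 1)).eval (Real.sin φ) = (-1) ^ n * Real.sin ((2 * n + 1) * φ) := by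
  rw [← Real.cos_pi_div_two_sub φ, Chebyshev.T_real_cos, ← Real.cos_pi_div_two_sub,
    ← Real.cos_add_nat_mul_pi]
  push_cast
  ring_nf

lemma two_div_pi_mul_le_abs_eval_T_odd (n : ℕ) {t : ℝ} (ht0 : 0 ≤ t) (ht : (2 * n + 1) * t ≤ 1) :
    2 / Real.pi * ((2 * n + 1) * t) ≤ |(Chebyshev.T ℝ (2 * n + 1)).eval t| := by
  have ht1 : t ≤ 1 := by nlinarith [mul_nonneg (Nat.cast_nonneg (α := ℝ) n) ht0]
  obtain ⟨φ, ⟨hφ0, hφ⟩, rfl⟩ : ∃ φ ∈ Icc 0 (Real.pi / 2), Real.sin φ = t :=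
    ⟨Real.arcsin t, ⟨Real.arcsin_nonneg.2 ht0, Real.arcsin_le_pi_div_two t⟩,
      Real.sin_arcsin (by linarith) ht1⟩
  have hangle : (2 * n + 1) * φ ≤ Real.pi / 2 := by
    have hle : (2 * n + 1) * (2 / Real.pi * φ) ≤ 1 :=
      le_trans (by gcongr; exact Real.mul_le_sin hφ0 hφ) ht
    calc (2 * n + 1) * φ = Real.pi / 2 * ((2 * n + 1) * (2 / Real.pi * φ)) := by field_simp
      _ ≤ Real.pi / 2 := mul_le_of_le_one_right (by positivity) hle
  calc 2 / Real.pi * ((2 * n + 1) * Real.sin φ)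
      ≤ 2 / Real.pi * ((2 * n + 1) * φ) := by gcongr; exact Real.sin_le hφ0
    _ ≤ Real.sin ((2 * n + 1) * φ) := Real.mul_le_sin (by positivity) hangle
    _ ≤ |Real.sin ((2 * n + 1) * φ)| := le_abs_self _
    _ = |(Chebyshev.T ℝ (2 * n + 1)).eval (Real.sin φ)| := by
      rw [eval_T_odd_sin, abs_mul, abs_neg_one_pow, one_mul]

/-- The quotient `T₂ₙ₊₁ / X`, whose square is a kernel concentrated at the origin. -/
noncomputable def chebyshevKernel (n : ℕ) : ℝ[X] :=
  (Chebyshev.T ℝ (2 * n + 1)).divX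

lemma mul_eval_chebyshevKernel (n : ℕ) (t : ℝ) :
    t * (chebyshevKernel n).eval t = (Chebyshev.T ℝ (2 * n + 1)).eval t := by
  have hcoeff : (Chebyshev.T ℝ (2 * n + 1)).coeff 0 = 0 := by
    rw [coeff_zero_eq_eval_zero]
    exact Chebyshev.T_eval_zero_of_odd ℝ (odd_two_mul_add_one _)
  have hdiv := congrArg (eval t) (X_mul_divX_add (Chebyshev.T ℝ (2 * n + 1)))
  simpa [chebyshevKernel, hcoeff] using hdiv

lemma natDegree_chebyshevKernel (n : ℕ) : (chebyshevKernel n).natDegree = 2 * n := by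
  rw [chebyshevKernel, natDegree_divX_eq_natDegree_tsub_one, Chebyshev.natDegree_T]
  omega

lemma eval_chebyshevKernel_sq_le (n : ℕ) {t : ℝ} (ht0 : t ≠ 0) (ht : |t| ≤ 1) :
    (chebyshevKernel n).eval t ^ 2 ≤ (t ^ 2)⁻¹ := by
  rw [← one_div, le_div_iff₀ (by positivity), ← mul_pow, mul_comm, mul_eval_chebyshevKernel,
    sq_le_one_iff_abs_le_one]
  exact Chebyshev.abs_eval_T_real_le_one _ ht

lemma le_eval_chebyshevKernel_sq (n : ℕ) {t : ℝ} (ht0 : 0 < t) (ht : (2 * n + 1) * t ≤ 1) :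
    (2 / Real.pi * (2 * n + 1)) ^ 2 ≤ (chebyshevKernel n).eval t ^ 2 := by
  rw [sq_le_sq, abs_of_nonneg (by positivity)]
  refine le_of_mul_le_mul_left ?_ ht0
  calc t * (2 / Real.pi * (2 * n + 1)) = 2 / Real.pi * ((2 * n + 1) * t) := by ring
    _ ≤ |(Chebyshev.T ℝ (2 * n + 1)).eval t| := two_div_pi_mul_le_abs_eval_T_odd n ht0.le ht
    _ = t * |(chebyshevKernel n).eval t| := by
      rw [← mul_eval_chebyshevKernel, abs_mul, abs_of_pos ht0]

lemma integral_chebyshevKernel_sq_le (n : ℕ) {a b : ℝ} (hab : a ≤ b) (ha : -1 ≤ a) (hb : b ≤ 1)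
    (h0 : (0 : ℝ) ∉ Icc a b) :
    ∫ t in a..b, (chebyshevKernel n).eval t ^ 2 ≤ a⁻¹ - b⁻¹ := by
  have hne (t : ℝ) (ht : t ∈ Icc a b) : t ≠ 0 := fun h => h0 (h ▸ ht)
  have hsq (t : ℝ) (ht : t ∈ Icc a b) : t ^ 2 ≠ 0 := pow_ne_zero 2 (hne t ht)
  have hcont : ContinuousOn (fun t : ℝ => (t ^ 2)⁻¹) (Icc a b) :=
    (continuous_pow 2).continuousOn.inv₀ hsq
  have hint : IntervalIntegrable (fun t : ℝ => (t ^ 2)⁻¹) MeasureTheory.volume a b :=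
    hcont.intervalIntegrable_of_Icc hab
  calc ∫ t in a..b, (chebyshevKernel n).eval t ^ 2
      ≤ ∫ t in a..b, (t ^ 2)⁻¹ :=
        intervalIntegral.integral_mono_on hab
          (((chebyshevKernel n).continuous.pow 2).intervalIntegrable _ _) hint fun t ht =>
            eval_chebyshevKernel_sq_le n (hne t ht) (abs_le.2 ⟨ha.trans ht.1, ht.2.trans hb⟩)
    _ = -b⁻¹ - -a⁻¹ := by
      refine intervalIntegral.integral_eq_sub_of_hasDerivAt (f := fun t => -t⁻¹)
        (fun t ht => ?_) hint
      rw [uIcc_of_le hab] at ht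
      simpa using (hasDerivAt_inv (hne t ht)).fun_neg
    _ = a⁻¹ - b⁻¹ := by ring

lemma le_integral_chebyshevKernel_sq (n : ℕ) :
    4 * (2 * n + 1) / Real.pi ^ 2 ≤ ∫ t in (-1)..1, (chebyshevKernel n).eval t ^ 2 := by
  set m : ℝ := 2 * n + 1
  have hm : 1 ≤ m := le_add_of_nonneg_left (by positivity)
  have hm0 : 0 < m := by linarith
  have hint (a b : ℝ) : IntervalIntegrable (fun t => (chebyshevKernel n).eval t ^ 2)
      MeasureTheory.volume a b :=
    ((chebyshevKernel n).continuous.pow 2).intervalIntegrable a b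
  calc 4 * m / Real.pi ^ 2 = ∫ _ in (0 : ℝ)..m⁻¹, (2 / Real.pi * m) ^ 2 := by
        rw [intervalIntegral.integral_const, smul_eq_mul]
        field_simp
        norm_num
    _ ≤ ∫ t in (0 : ℝ)..m⁻¹, (chebyshevKernel n).eval t ^ 2 :=
        intervalIntegral.integral_mono_on_of_le_Ioo (inv_nonneg.2 hm0.le)
          intervalIntegrable_const (hint _ _) fun t ht =>
            le_eval_chebyshevKernel_sq n ht.1 ((le_inv_mul_iff₀ hm0).1 (by simpa using ht.2.le))
    _ ≤ ∫ t in (-1)..1, (chebyshevKernel n).eval t ^ 2 :=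
        intervalIntegral.integral_mono_interval (by norm_num) (inv_nonneg.2 hm0.le)
          (inv_le_one_of_one_le₀ hm) (.of_forall fun t => sq_nonneg _) (hint _ _)

lemma exists_approximatesStep_chebyshev (n : ℕ) {δ : ℝ} (hδ : 0 < δ) :
    ∃ P : ℝ[X], P.natDegree ≤ 4 * n + 1 ∧
      ApproximatesStep P 0 δ (Real.pi ^ 2 / (4 * (2 * n + 1) * δ)) := by
  have hmass := le_integral_chebyshevKernel_sq n
  have htail : δ⁻¹ ≤ Real.pi ^ 2 / (4 * (2 * n + 1) * δ) *
      ∫ t in (-1)..1, (chebyshevKernel n).eval t ^ 2 :=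
    calc δ⁻¹ = Real.pi ^ 2 / (4 * (2 * n + 1) * δ) * (4 * (2 * n + 1) / Real.pi ^ 2) := by
          field_simp
      _ ≤ _ := by gcongr
  have hdeg : (chebyshevKernel n ^ 2).natDegree = 4 * n := by
    rw [natDegree_pow, natDegree_chebyshevKernel]
    ring
  rw [← hdeg]
  refine exists_approximatesStep_of_kernel (fun t _ => ?_) ?_ (fun x hx hxδ => ?_)
    fun x hx hxδ => ?_ <;> simp only [eval_pow]
  · positivity
  · exact lt_of_lt_of_le (by positivity) hmass
  · refine le_trans ?_ htail
    have hinv : (-x)⁻¹ ≤ δ⁻¹ := inv_anti₀ hδ (by linarith)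
    have hint := integral_chebyshevKernel_sq_le n hx.1 le_rfl hx.2 fun h => by linarith [h.2]
    rw [inv_neg_one] at hint
    rw [inv_neg] at hinv
    linarith
  · refine le_trans ?_ htail
    have hinv : x⁻¹ ≤ δ⁻¹ := inv_anti₀ hδ hxδ
    have hint := integral_chebyshevKernel_sq_le n hx.2 hx.1 le_rfl fun h => by linarith [h.1]
    rw [inv_one] at hint
    linarith

/-! ### Amplification by majority -/

lemma sum_range_choose_upper_half (m : ℕ) :
    ∑ i ∈ Finset.range (m + 1), (2 * m + 1).choose (m + 1 + i) = 4 ^ m := by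
  rw [← Nat.sum_range_choose_halfway, ← Finset.sum_range_reflect]
  refine Finset.sum_congr rfl fun i hi => ?_
  have hi : i ≤ m := Finset.mem_range_succ_iff.1 hi
  exact Nat.choose_symm_of_eq_add (by omega)

/-- The majority polynomial: its value at `p` is the probability that at least `m + 1` of `2m + 1`
independent coin tosses show heads, when each does so with probability `p`. -/
noncomputable def majorityPolynomial (R : Type*) [CommRing R] (m : ℕ) : R[X] :=
  ∑ i ∈ Finset.range (m + 1), bernsteinPolynomial R (2 * m + 1) (m + 1 + i)

section CommRing

variable (R : Type*) [CommRing R]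

lemma majorityPolynomial_comp_one_sub_X (m : ℕ) :
    (majorityPolynomial R m).comp (1 - X) = 1 - majorityPolynomial R m := by
  have hflip : (majorityPolynomial R m).comp (1 - X) =
      ∑ i ∈ Finset.range (m + 1), bernsteinPolynomial R (2 * m + 1) i := by
    rw [majorityPolynomial, Polynomial.sum_comp, ← Finset.sum_range_reflect]
    refine Finset.sum_congr rfl fun i hi => ?_
    have hi : i ≤ m := Finset.mem_range_succ_iff.1 hi
    rw [bernsteinPolynomial.flip _ _ _ (by omega)]
    congr 1
    omega
  rw [hflip, eq_sub_iff_add_eq, majorityPolynomial, ← Finset.sum_range_add,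
    ← bernsteinPolynomial.sum R (2 * m + 1)]
  congr 2
  omega

lemma natDegree_majorityPolynomial_le (m : ℕ) :
    (majorityPolynomial R m).natDegree ≤ 2 * m + 1 := by
  refine natDegree_sum_le_of_forall_le _ _ fun i hi => ?_
  have hi : i ≤ m := Finset.mem_range_succ_iff.1 hi
  rw [bernsteinPolynomial]
  compute_degree!
  omega

variable {R}

lemma eval_majorityPolynomial (m : ℕ) (p : R) :
    (majorityPolynomial R m).eval p = ∑ i ∈ Finset.range (m + 1),
      ((2 * m + 1).choose (m + 1 + i) : R) * p ^ (m + 1 + i) * (1 - p) ^ (m - i) := by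
  rw [majorityPolynomial, eval_finsetSum]
  refine Finset.sum_congr rfl fun i _ => ?_
  rw [show m - i = 2 * m + 1 - (m + 1 + i) by omega]
  simp [bernsteinPolynomial]

lemma eval_majorityPolynomial_one_sub (m : ℕ) (p : R) :
    (majorityPolynomial R m).eval (1 - p) = 1 - (majorityPolynomial R m).eval p := by
  simpa [eval_comp] using congrArg (eval p) (majorityPolynomial_comp_one_sub_X R m)

end CommRing

section OrderedRing

variable {R : Type*} [CommRing R] [LinearOrder R] [IsStrictOrderedRing R] {p : R}

lemma eval_majorityPolynomial_nonneg (m : ℕ) (hp : p ∈ Icc 0 1) :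
    0 ≤ (majorityPolynomial R m).eval p := by
  have hp0 : 0 ≤ p := hp.1
  have hq0 : 0 ≤ 1 - p := sub_nonneg.2 hp.2
  rw [eval_majorityPolynomial]
  positivity

lemma eval_majorityPolynomial_mem_Icc (m : ℕ) (hp : p ∈ Icc 0 1) :
    (majorityPolynomial R m).eval p ∈ Icc 0 1 := by
  refine ⟨eval_majorityPolynomial_nonneg m hp, sub_nonneg.1 ?_⟩
  rw [← eval_majorityPolynomial_one_sub]
  exact eval_majorityPolynomial_nonneg m ⟨sub_nonneg.2 hp.2, sub_le_self 1 hp.1⟩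

lemma eval_majorityPolynomial_le (m : ℕ) (hp0 : 0 ≤ p) (hp : p ≤ 1 - p) :
    (majorityPolynomial R m).eval p ≤ (4 * (p * (1 - p))) ^ m := by
  have hp1 : p ≤ 1 := by linarith
  have hterm (i : ℕ) (hi : i ≤ m) :
      p ^ (m + 1 + i) * (1 - p) ^ (m - i) ≤ (p * (1 - p)) ^ m :=
    calc p ^ (m + 1 + i) * (1 - p) ^ (m - i)
        ≤ p ^ (m + i) * (1 - p) ^ (m - i) := by
          gcongr ?_ * _
          exact pow_le_pow_of_le_one hp0 hp1 (by omega)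
      _ = p ^ m * (p ^ i * (1 - p) ^ (m - i)) := by ring
      _ ≤ p ^ m * ((1 - p) ^ i * (1 - p) ^ (m - i)) := by
          have : 0 ≤ 1 - p := hp0.trans hp
          gcongr
      _ = (p * (1 - p)) ^ m := by rw [← pow_add, Nat.add_sub_cancel' hi, mul_pow]
  calc (majorityPolynomial R m).eval p
      ≤ ∑ i ∈ Finset.range (m + 1),
          ((2 * m + 1).choose (m + 1 + i) : R) * (p * (1 - p)) ^ m := by
        rw [eval_majorityPolynomial]
        refine Finset.sum_le_sum fun i hi => ?_
        rw [mul_assoc]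
        gcongr
        exact hterm i (Finset.mem_range_succ_iff.1 hi)
    _ = (4 * (p * (1 - p))) ^ m := by
        rw [← Finset.sum_mul, ← Nat.cast_sum, sum_range_choose_upper_half, Nat.cast_pow,
          Nat.cast_ofNat, ← mul_pow]

lemma eval_majorityPolynomial_le_of_le {ε : R} (m : ℕ) (hp0 : 0 ≤ p) (hpε : p ≤ ε)
    (hε : ε ≤ 1 - ε) :
    (majorityPolynomial R m).eval p ≤ (4 * (ε * (1 - ε))) ^ m := by
  refine (eval_majorityPolynomial_le m hp0 (by linarith)).trans ?_
  have hmono : p * (1 - p) ≤ ε * (1 - ε) := by nlinarith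
  have hnonneg : 0 ≤ p * (1 - p) := mul_nonneg hp0 (by linarith)
  gcongr

end OrderedRing

namespace ApproximatesStep

variable {P : ℝ[X]} {c δ ε : ℝ}

lemma mono {ε' : ℝ} (h : ApproximatesStep P c δ ε) (hε : ε ≤ ε') : ApproximatesStep P c δ ε' where
  eval_mem_Icc := h.eval_mem_Icc
  one_sub_le_eval x hx hxδ := (sub_le_sub_left hε 1).trans (h.one_sub_le_eval x hx hxδ)
  eval_le x hx hxδ := (h.eval_le x hx hxδ).trans hε

lemma majorityPolynomial_comp (h : ApproximatesStep P c δ ε) (hε : ε ≤ 1 - ε) (m : ℕ) :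
    ApproximatesStep ((majorityPolynomial ℝ m).comp P) c δ ((4 * (ε * (1 - ε))) ^ m) where
  eval_mem_Icc x hx := by
    rw [eval_comp]
    exact eval_majorityPolynomial_mem_Icc m (h.eval_mem_Icc x hx)
  one_sub_le_eval x hx hxδ := by
    have hfar := h.one_sub_le_eval x hx hxδ
    have htail := eval_majorityPolynomial_le_of_le m (sub_nonneg.2 (h.eval_mem_Icc x hx).2)
      (sub_le_comm.1 hfar) hε
    rw [eval_majorityPolynomial_one_sub] at htail
    rw [eval_comp]
    linarith
  eval_le x hx hxδ := by
    rw [eval_comp]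
    exact eval_majorityPolynomial_le_of_le m (h.eval_mem_Icc x hx).1 (h.eval_le x hx hxδ) hε

lemma recenter (h : ApproximatesStep P 0 δ ε) (hc : c ∈ Icc (-1 : ℝ) 1) :
    ApproximatesStep (P.comp (C (1 / 2) * (X - C c))) c (2 * δ) ε := by
  have heval (x : ℝ) : (P.comp (C (1 / 2) * (X - C c))).eval x = P.eval ((x - c) / 2) := by
    rw [eval_comp, eval_mul, eval_sub, eval_C, eval_X, eval_C, one_div_mul_eq_div]
  have hmem (x : ℝ) (hx : x ∈ Icc (-1 : ℝ) 1) : (x - c) / 2 ∈ Icc (-1 : ℝ) 1 :=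
    ⟨by linarith [hx.1, hc.2], by linarith [hx.2, hc.1]⟩
  refine ⟨fun x hx => ?_, fun x hx hxδ => ?_, fun x hx hxδ => ?_⟩ <;> rw [heval]
  · exact h.eval_mem_Icc _ (hmem x hx)
  · exact h.one_sub_le_eval _ (hmem x hx) (by linarith)
  · exact h.eval_le _ (hmem x hx) (by linarith)

end ApproximatesStep

/-! ### Choice of parameters -/

lemma exists_approximatesStep_quarter {c δ : ℝ} (hc : c ∈ Icc (-1 : ℝ) 1) (hδ0 : 0 < δ)
    (hδ : δ ≤ 2) :
    ∃ P : ℝ[X], (P.natDegree : ℝ) ≤ 50 / δ ∧ ApproximatesStep P c δ (1 / 4) := by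
  set n := ⌈10 / δ⌉₊
  have hn_lower : 10 / δ ≤ n := Nat.le_ceil _
  have hn_upper : (n : ℝ) < 10 / δ + 1 := Nat.ceil_lt_add_one (by positivity)
  obtain ⟨P, hdeg, hP⟩ := exists_approximatesStep_chebyshev n (half_pos hδ0)
  have herror : Real.pi ^ 2 / (4 * (2 * n + 1) * (δ / 2)) ≤ 1 / 4 := by
    have hpi : Real.pi ^ 2 ≤ 10 := by nlinarith [Real.pi_pos, Real.pi_lt_d2]
    have hnδ : 10 ≤ n * δ := (div_le_iff₀ hδ0).1 hn_lower
    rw [div_le_iff₀ (by positivity)]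
    linarith
  refine ⟨P.comp (C (1 / 2) * (X - C c)), ?_, ?_⟩
  · have hlin : (C (1 / 2 : ℝ) * (X - C c)).natDegree ≤ 1 := by compute_degree
    have hcomp : (P.comp (C (1 / 2) * (X - C c))).natDegree ≤ 4 * n + 1 :=
      natDegree_comp_le.trans (by simpa using Nat.mul_le_mul hdeg hlin)
    have hinv : 5 ≤ 10 / δ := by rw [le_div_iff₀ hδ0]; linarith
    calc ((P.comp (C (1 / 2) * (X - C c))).natDegree : ℝ) ≤ 4 * n + 1 := mod_cast hcomp
      _ ≤ 5 * (10 / δ) := by linarith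
      _ = 50 / δ := by ring
  · simpa [mul_div_cancel₀] using (hP.mono herror).recenter hc

lemma three_div_four_pow_le {η : ℝ} {m : ℕ} (hη : 0 < η) (hm : 4 * Real.log (1 / η) ≤ m) :
    (3 / 4 : ℝ) ^ m ≤ η := by
  have hbase : (3 / 4 : ℝ) ≤ Real.exp (-(1 / 4)) := by
    linarith [Real.add_one_le_exp (-(1 / 4) : ℝ)]
  rw [one_div, Real.log_inv] at hm
  calc (3 / 4 : ℝ) ^ m ≤ Real.exp (-(1 / 4)) ^ m := by gcongr
    _ = Real.exp (m * -(1 / 4)) := (Real.exp_nat_mul _ _).symm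
    _ ≤ Real.exp (Real.log η) := Real.exp_le_exp.2 (by linarith)
    _ = η := Real.exp_log hη

lemma exists_approximatesStep {c δ η : ℝ} (hc : c ∈ Icc (-1 : ℝ) 1) (hδ0 : 0 < δ) (hδ : δ ≤ 2)
    (hη0 : 0 < η) (hη : η ≤ 1 / 2) :
    ∃ P : ℝ[X], (P.natDegree : ℝ) ≤ 700 / δ * Real.log (1 / η) ∧ ApproximatesStep P c δ η := by
  set L := Real.log (1 / η)
  have hL : 1 / 2 ≤ L := by
    have hlog := Real.one_sub_inv_le_log_of_pos (one_div_pos.2 hη0)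
    rw [one_div, inv_inv, ← one_div] at hlog
    linarith
  set m := ⌈4 * L⌉₊
  have hm_lower : 4 * L ≤ m := Nat.le_ceil _
  have hm_upper : (m : ℝ) < 4 * L + 1 := Nat.ceil_lt_add_one (by linarith)
  obtain ⟨Q, hdeg, hQ⟩ := exists_approximatesStep_quarter hc hδ0 hδ
  refine ⟨(majorityPolynomial ℝ m).comp Q, ?_, ?_⟩
  · have hcomp : ((majorityPolynomial ℝ m).comp Q).natDegree ≤ (2 * m + 1) * Q.natDegree :=
      natDegree_comp_le.trans (Nat.mul_le_mul_right _ (natDegree_majorityPolynomial_le ℝ m))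
    calc (((majorityPolynomial ℝ m).comp Q).natDegree : ℝ)
        ≤ (2 * m + 1) * Q.natDegree := mod_cast hcomp
      _ ≤ 14 * L * (50 / δ) := by gcongr; linarith
      _ = 700 / δ * L := by ring
  · refine (hQ.majorityPolynomial_comp (by norm_num) m).mono ?_
    norm_num only
    exact three_div_four_pow_le hη0 hm_lower

/-- There is a constant `C > 0` such that for all `η, Δ ∈ (0, 1/2)` and
`c ∈ [-1, 1]` there exists a real polynomial `P` of degree at most
`⌈C (1/Δ) log(1/η)⌉` with `|P(x)| ≤ 1` on `[-1, 1]`, `P(x) ∈ [1-η, 1]` on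
`[-1, c - Δ/2]`, and `P(x) ∈ [-η, η]` on `[c + Δ/2, 1]`. -/
theorem shifted_sign_polynomial_approximation :
    ∃ C : ℝ, 0 < C ∧
      ∀ η Δ : ℝ, η ∈ Set.Ioo (0 : ℝ) (1 / 2) → Δ ∈ Set.Ioo (0 : ℝ) (1 / 2) →
        ∀ c ∈ Set.Icc (-1 : ℝ) 1,
          ∃ P : Polynomial ℝ,
            P.natDegree ≤ ⌈C * (1 / Δ) * Real.log (1 / η)⌉₊ ∧
            (∀ x ∈ Set.Icc (-1 : ℝ) 1, |P.eval x| ≤ 1) ∧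
            (∀ x ∈ Set.Icc (-1 : ℝ) (c - Δ / 2), P.eval x ∈ Set.Icc (1 - η) 1) ∧
            (∀ x ∈ Set.Icc (c + Δ / 2) (1 : ℝ), P.eval x ∈ Set.Icc (-η) η) := by
  refine ⟨1400, by norm_num, fun η Δ ⟨hη0, hη⟩ ⟨hΔ0, hΔ⟩ c hc => ?_⟩
  obtain ⟨P, hdeg, hP⟩ :=
    exists_approximatesStep hc (half_pos hΔ0) (by linarith) hη0 hη.le
  refine ⟨P, ?_, fun x hx => ?_, fun x hx => ?_, fun x hx => ?_⟩
  · rw [show 700 / (Δ / 2) = 1400 * (1 / Δ) by ring] at hdeg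
    exact_mod_cast hdeg.trans (Nat.le_ceil _)
  · have ⟨hnonneg, hle⟩ := hP.eval_mem_Icc x hx
    rwa [abs_of_nonneg hnonneg]
  · have hx' : x ∈ Icc (-1 : ℝ) 1 := ⟨hx.1, by linarith [hx.2, hc.2]⟩
    exact ⟨hP.one_sub_le_eval x hx' hx.2, (hP.eval_mem_Icc x hx').2⟩
  · have hx' : x ∈ Icc (-1 : ℝ) 1 := ⟨by linarith [hx.1, hc.1], hx.2⟩
    exact ⟨by linarith [(hP.eval_mem_Icc x hx').1], hP.eval_le x hx' hx.1⟩
end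

section
/- For every constant threshold setting there exists a low-degree even polynomial approximating the rectangle function: there is a constant C > 0 such that for all η, Δ ∈ (0, 1/2) and all c ∈ [-1, 1] with c > Δ/2, there exists a real polynomial P of degree at most ⌈C · (1/Δ) · log(1/η)⌉ such that P is even (P(-x) = P(x) for all x), |P(x)| ≤ 1 for all x ∈ [-1, 1], P(x) ∈ [1-η, 1] for all x ∈ [-c + Δ/2, c - Δ/2], and P(x) ∈ [-η, η] for all x ∈ [-1, -c - Δ/2] ∪ [c + Δ/2, 1]. -/
/-!
Integrating the Fejér kernel `sin² (nθ) / sin² θ`, a polynomial of degree `n - 1` in `sin² θ`, gives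
an odd polynomial `S` in `y = sin θ` which increases on `[-1, 1]` and stays within a factor
`1 - O(1 / (n d))` of its maximum on `[d, 1]`: a smooth sign function. The normalised difference
`x ↦ (S ((x + c) / 2) - S ((x - c) / 2)) / (2 S(1))` is then even and approximates the rectangle up
to a constant error, at degree `O(1 / Δ)`. Composing with the majority polynomial
`y ↦ ℙ (Bin(2k + 1, y) > k)`, which pushes values near `0` and `1` exponentially closer to `0`
and `1`, brings the error down to `η` for `k = O(log (1 / η))`.
-/

open Polynomial Set

section Symmetric

variable {G : Type*} [AddCommGroup G] [LinearOrder G] [IsOrderedAddMonoid G] {a b x : G}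

theorem abs_mem_Icc_of_mem_union (ha : 0 ≤ a) (hx : x ∈ Icc (-b) (-a) ∪ Icc a b) :
    |x| ∈ Icc a b := by
  rcases hx with hx | hx
  · rw [abs_of_nonpos (hx.2.trans (neg_nonpos.2 ha))]
    exact ⟨le_neg.1 hx.2, neg_le.1 hx.1⟩
  · rwa [abs_of_nonneg (ha.trans hx.1)]

theorem monotoneOn_Icc_neg_of_odd {H : Type*} [AddCommGroup H] [PartialOrder H]
    [IsOrderedAddMonoid H] {f : G → H} (hodd : Function.Odd f) (hmono : MonotoneOn f (Icc 0 a)) :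
    MonotoneOn f (Icc (-a) a) := by
  rcases lt_or_ge a 0 with ha | ha
  · rw [Icc_eq_empty (by simpa using ha)]
    exact fun x hx ↦ hx.elim
  have h_neg : MonotoneOn f (Icc (-a) 0) := fun x hx y hy hxy ↦ by
    have h := hmono ⟨neg_nonneg.2 hy.2, neg_le.1 hy.1⟩ ⟨neg_nonneg.2 hx.2, neg_le.1 hx.1⟩
      (neg_le_neg hxy)
    rwa [hodd, hodd, neg_le_neg_iff] at h
  rw [← Icc_union_Icc_eq_Icc (neg_nonpos.2 ha) ha]
  exact h_neg.union_right hmono (isGreatest_Icc (neg_nonpos.2 ha)) (isLeast_Icc ha)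

end Symmetric

section Majority

variable (R : Type*) [CommRing R]

theorem natDegree_bernsteinPolynomial_le (n ν : ℕ) :
    (bernsteinPolynomial R n ν).natDegree ≤ n := by
  rcases lt_or_ge n ν with h | h
  · simp [bernsteinPolynomial.eq_zero_of_lt R h]
  · have h_sub : ((1 : R[X]) - X).natDegree ≤ 1 := by compute_degree
    have h_pow : ((1 - X : R[X]) ^ (n - ν)).natDegree ≤ n - ν := by
      simpa using natDegree_pow_le_of_le (n - ν) h_sub
    have h_mul : ((n.choose ν : R[X]) * X ^ ν).natDegree ≤ ν := by compute_degree
    exact (natDegree_mul_le_of_le h_mul h_pow).trans (by omega)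

/-- The majority polynomial, whose value at `y` is the probability that more than half of `2k + 1`
independent trials with success probability `y` succeed; the summation index is the number of
failures. It amplifies a constant-error approximation. -/
noncomputable def majorityPoly (k : ℕ) : R[X] :=
  ∑ i ∈ Finset.range (k + 1), bernsteinPolynomial R (2 * k + 1) (2 * k + 1 - i)

theorem natDegree_majorityPoly_le (k : ℕ) : (majorityPoly R k).natDegree ≤ 2 * k + 1 :=
  natDegree_sum_le_of_forall_le _ _ fun _ _ ↦ natDegree_bernsteinPolynomial_le R _ _

theorem majorityPoly_add_comp_one_sub_X (k : ℕ) :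
    majorityPoly R k + (majorityPoly R k).comp (1 - X) = 1 := by
  have h_comp : (majorityPoly R k).comp (1 - X) =
      ∑ i ∈ Finset.range (k + 1), bernsteinPolynomial R (2 * k + 1) i := by
    rw [majorityPoly, sum_comp]
    refine Finset.sum_congr rfl fun i hi ↦ (bernsteinPolynomial.flip' R _ _ ?_).symm
    have := Finset.mem_range.1 hi
    omega
  have h_upper : majorityPoly R k =
      ∑ i ∈ Finset.Ico (k + 1) (2 * k + 2), bernsteinPolynomial R (2 * k + 1) i := by
    rw [majorityPoly, Finset.range_eq_Ico, Finset.sum_Ico_reflect _ _ (by omega)]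
    congr 2
    omega
  rw [h_comp, h_upper, add_comm, Finset.sum_range_add_sum_Ico _ (by omega)]
  exact bernsteinPolynomial.sum R (2 * k + 1)

variable {R}

theorem eval_one_sub_majorityPoly (k : ℕ) (y : R) :
    (majorityPoly R k).eval (1 - y) = 1 - (majorityPoly R k).eval y := by
  have h := congrArg (eval y) (majorityPoly_add_comp_one_sub_X R k)
  simp only [eval_add, eval_comp, eval_sub, eval_one, eval_X] at h
  exact eq_sub_of_add_eq' h

variable [LinearOrder R] [IsStrictOrderedRing R] {y : R}

theorem eval_bernsteinPolynomial_nonneg (n ν : ℕ) (hy : y ∈ Icc 0 1) :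
    0 ≤ (bernsteinPolynomial R n ν).eval y := by
  have hy0 : 0 ≤ y := hy.1
  have hy1 : 0 ≤ 1 - y := sub_nonneg.2 hy.2
  simp only [bernsteinPolynomial, eval_mul, eval_natCast, eval_pow, eval_X, eval_sub, eval_one]
  positivity

theorem eval_majorityPoly_mem_Icc (k : ℕ) (hy : y ∈ Icc 0 1) :
    (majorityPoly R k).eval y ∈ Icc 0 1 := by
  have h_nonneg : ∀ z ∈ Icc (0 : R) 1, 0 ≤ (majorityPoly R k).eval z := fun z hz ↦ by
    rw [majorityPoly, eval_finsetSum]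
    exact Finset.sum_nonneg fun i _ ↦ eval_bernsteinPolynomial_nonneg _ _ hz
  refine ⟨h_nonneg y hy, sub_nonneg.1 ?_⟩
  rw [← eval_one_sub_majorityPoly]
  exact h_nonneg _ ⟨sub_nonneg.2 hy.2, sub_le_self 1 hy.1⟩

theorem eval_majorityPoly_le (k : ℕ) (hy : y ∈ Icc 0 1) :
    (majorityPoly R k).eval y ≤ 4 ^ k * y ^ (k + 1) := by
  have hy0 : 0 ≤ y := hy.1
  have hy1 : 0 ≤ 1 - y := sub_nonneg.2 hy.2
  have h_term : ∀ i ∈ Finset.range (k + 1),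
      (bernsteinPolynomial R (2 * k + 1) (2 * k + 1 - i)).eval y ≤
        ((2 * k + 1).choose i : R) * y ^ (k + 1) := fun i hi ↦ by
    have hik : i ≤ k := Nat.lt_succ_iff.1 (Finset.mem_range.1 hi)
    simp only [bernsteinPolynomial, eval_mul, eval_natCast, eval_pow, eval_X, eval_sub, eval_one]
    rw [Nat.choose_symm (by omega)]
    calc ((2 * k + 1).choose i : R) * y ^ (2 * k + 1 - i) * (1 - y) ^ (2 * k + 1 - (2 * k + 1 - i))
        ≤ ((2 * k + 1).choose i : R) * y ^ (2 * k + 1 - i) :=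
          mul_le_of_le_one_right (by positivity) (pow_le_one₀ hy1 (sub_le_self 1 hy0))
      _ ≤ ((2 * k + 1).choose i : R) * y ^ (k + 1) :=
          mul_le_mul_of_nonneg_left (pow_le_pow_of_le_one hy0 hy.2 (by omega)) (by positivity)
  calc (majorityPoly R k).eval y
      ≤ ∑ i ∈ Finset.range (k + 1), ((2 * k + 1).choose i : R) * y ^ (k + 1) := by
        rw [majorityPoly, eval_finsetSum]
        exact Finset.sum_le_sum h_term
    _ = 4 ^ k * y ^ (k + 1) := by
        rw [← Finset.sum_mul, ← Nat.cast_sum, Nat.sum_range_choose_halfway]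
        norm_cast

theorem one_sub_le_eval_majorityPoly (k : ℕ) (hy : y ∈ Icc 0 1) :
    1 - 4 ^ k * (1 - y) ^ (k + 1) ≤ (majorityPoly R k).eval y := by
  have h := eval_majorityPoly_le k (y := 1 - y) ⟨sub_nonneg.2 hy.2, sub_le_self 1 hy.1⟩
  rw [eval_one_sub_majorityPoly] at h
  exact sub_le_comm.1 h

end Majority

section OddPrimitive

variable {K : Type*} [Field K]

/-- The odd polynomial with derivative `p(X²)`. -/
noncomputable def oddPrimitive (p : K[X]) : K[X] :=
  p.sum fun i a ↦ monomial (2 * i + 1) (a / (2 * i + 1))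

theorem natDegree_oddPrimitive_le (p : K[X]) :
    (oddPrimitive p).natDegree ≤ 2 * p.natDegree + 1 := by
  refine natDegree_sum_le_of_forall_le _ _ fun i hi ↦ (natDegree_monomial_le _).trans ?_
  have := le_natDegree_of_mem_supp i hi
  omega

theorem odd_eval_oddPrimitive (p : K[X]) : Function.Odd fun y ↦ (oddPrimitive p).eval y := by
  intro y
  simp only [oddPrimitive, Polynomial.sum, eval_finsetSum, eval_monomial, ← Finset.sum_neg_distrib]
  exact Finset.sum_congr rfl fun i _ ↦ by rw [Odd.neg_pow ⟨i, rfl⟩, mul_neg]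

theorem derivative_oddPrimitive [CharZero K] (p : K[X]) :
    derivative (oddPrimitive p) = expand K 2 p := by
  rw [oddPrimitive, Polynomial.sum, derivative_sum, expand_eq_sum, Polynomial.sum]
  refine Finset.sum_congr rfl fun i _ ↦ ?_
  have h : (2 * i + 1 : K) ≠ 0 := by exact_mod_cast (2 * i).succ_ne_zero
  rw [derivative_monomial, ← pow_mul, C_mul_X_pow_eq_monomial, Nat.add_sub_cancel]
  push_cast
  rw [div_mul_cancel₀ _ h]

end OddPrimitive

section FejerStep

variable {y : ℝ} (n : ℕ)

/-- The Fejér kernel: the polynomial `(1 - Tₙ(1 - 2X)) / X`, whose value at `sin² θ` is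
`2 sin² (nθ) / sin² θ`. -/
noncomputable def fejerPoly : ℝ[X] :=
  ((1 - Chebyshev.T ℝ n).comp (1 - 2 * X)).divX

theorem natDegree_fejerPoly_le : (fejerPoly n).natDegree ≤ n - 1 := by
  have h_lin : ((1 : ℝ[X]) - 2 * X).natDegree ≤ 1 := by compute_degree
  have h_cheb : (1 - Chebyshev.T ℝ n).natDegree ≤ n :=
    (natDegree_sub_le _ _).trans (by simp)
  rw [fejerPoly, natDegree_divX_eq_natDegree_tsub_one]
  exact Nat.sub_le_sub_right
    (natDegree_comp_le.trans ((Nat.mul_le_mul h_cheb h_lin).trans_eq (mul_one n))) 1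

theorem fejerPoly_mul_X :
    fejerPoly n * X = (1 - Chebyshev.T ℝ n).comp (1 - 2 * X) := by
  have h_coeff : ((1 - Chebyshev.T ℝ n).comp (1 - 2 * X)).coeff 0 = 0 := by
    simp [coeff_zero_eq_eval_zero, eval_comp]
  rw [fejerPoly, ← add_zero (divX _ * X), ← C_0, ← h_coeff, divX_mul_X_add]

theorem eval_fejerPoly_sin_sq_mul (θ : ℝ) :
    (fejerPoly n).eval (Real.sin θ ^ 2) * Real.sin θ ^ 2 = 2 * Real.sin (n * θ) ^ 2 := by
  have h_cos : ∀ t, 1 - 2 * Real.sin t ^ 2 = Real.cos (2 * t) := fun t ↦ by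
    rw [Real.cos_two_mul, Real.cos_sq']; ring
  have h := congrArg (eval (Real.sin θ ^ 2)) (fejerPoly_mul_X n)
  simp only [eval_mul, eval_X, eval_comp, eval_sub, eval_one, eval_ofNat] at h
  rw [h, h_cos, Chebyshev.T_real_cos, Int.cast_natCast, mul_left_comm, ← h_cos, sub_sub_cancel]

theorem eval_sq_fejerPoly_mul (hy : y ∈ Icc (-1) 1) :
    (fejerPoly n).eval (y ^ 2) * y ^ 2 = 2 * Real.sin (n * Real.arcsin y) ^ 2 := by
  simpa only [Real.sin_arcsin' hy] using eval_fejerPoly_sin_sq_mul n (Real.arcsin y)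

theorem eval_sq_fejerPoly_nonneg (hy : y ∈ Ioc 0 1) : 0 ≤ (fejerPoly n).eval (y ^ 2) := by
  refine nonneg_of_mul_nonneg_left ?_ (pow_pos hy.1 2)
  rw [eval_sq_fejerPoly_mul n ⟨by linarith [hy.1], hy.2⟩]
  positivity

theorem eval_sq_fejerPoly_le (hy : y ∈ Ioc 0 1) : (fejerPoly n).eval (y ^ 2) ≤ 2 / y ^ 2 := by
  rw [le_div_iff₀ (pow_pos hy.1 2), eval_sq_fejerPoly_mul n ⟨by linarith [hy.1], hy.2⟩]
  linarith [Real.sin_sq_le_one (n * Real.arcsin y)]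

variable {n}

theorem half_mul_le_sin_mul_arcsin (hy : y ∈ Icc 0 1) (hny : n * y ≤ 1) :
    n * y / 2 ≤ Real.sin (n * Real.arcsin y) := by
  have hsin : Real.sin (Real.arcsin y) = y := Real.sin_arcsin' ⟨by linarith [hy.1], hy.2⟩
  have harcsin : 0 ≤ Real.arcsin y := Real.arcsin_nonneg.2 hy.1
  have h_le : y ≤ Real.arcsin y := (Real.sin_le harcsin).trans_eq' hsin
  have h_jordan : 2 / Real.pi * Real.arcsin y ≤ y :=
    (Real.mul_le_sin harcsin (Real.arcsin_le_pi_div_two y)).trans_eq hsin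
  have h_angle : n * Real.arcsin y ≤ Real.pi / 2 :=
    calc n * Real.arcsin y = Real.pi / 2 * (n * (2 / Real.pi * Real.arcsin y)) := by field_simp
      _ ≤ Real.pi / 2 * (n * y) := by gcongr
      _ ≤ Real.pi / 2 := mul_le_of_le_one_right (by positivity) hny
  have h_pi : 1 / 2 ≤ 2 / Real.pi := by
    rw [div_le_div_iff₀ two_pos Real.pi_pos]
    linarith [Real.pi_le_four]
  calc n * y / 2 = 1 / 2 * (n * y) := by ring
    _ ≤ 2 / Real.pi * (n * Real.arcsin y) := by
        have := hy.1
        gcongr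
    _ ≤ Real.sin (n * Real.arcsin y) := Real.mul_le_sin (by positivity) h_angle

theorem sq_div_two_le_eval_sq_fejerPoly (hy : y ∈ Ioc 0 1) (hny : n * y ≤ 1) :
    (n : ℝ) ^ 2 / 2 ≤ (fejerPoly n).eval (y ^ 2) := by
  have hy0 := hy.1
  have h_sin : (n * y / 2) ^ 2 ≤ Real.sin (n * Real.arcsin y) ^ 2 :=
    pow_le_pow_left₀ (by positivity) (half_mul_le_sin_mul_arcsin ⟨hy0.le, hy.2⟩ hny) 2
  refine le_of_mul_le_mul_right ?_ (pow_pos hy0 2)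
  rw [eval_sq_fejerPoly_mul n ⟨by linarith, hy.2⟩]
  linarith

variable (n)

/-- The primitive of the Fejér kernel `y ↦ fejerPoly n (y²)`, a smooth sign function on `[-1, 1]`;
it is not normalised. -/
noncomputable def fejerStep : ℝ[X] := oddPrimitive (fejerPoly n)

theorem natDegree_fejerStep_le : (fejerStep n).natDegree ≤ 2 * (n - 1) + 1 :=
  (natDegree_oddPrimitive_le _).trans (by gcongr; exact natDegree_fejerPoly_le n)

theorem odd_eval_fejerStep : Function.Odd fun y ↦ (fejerStep n).eval y :=
  odd_eval_oddPrimitive _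

theorem hasDerivAt_fejerStep (y : ℝ) :
    HasDerivAt (fun y ↦ (fejerStep n).eval y) ((fejerPoly n).eval (y ^ 2)) y := by
  simpa only [fejerStep, derivative_oddPrimitive, expand_eval] using (fejerStep n).hasDerivAt y

theorem monotoneOn_eval_fejerStep : MonotoneOn (fun y ↦ (fejerStep n).eval y) (Icc (-1) 1) := by
  refine monotoneOn_Icc_neg_of_odd (odd_eval_fejerStep n) ?_
  refine monotoneOn_of_deriv_nonneg (convex_Icc 0 1) (fejerStep n).continuousOn
    (fejerStep n).differentiableOn fun y hy ↦ ?_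
  rw [interior_Icc] at hy
  rw [(hasDerivAt_fejerStep n y).deriv]
  exact eval_sq_fejerPoly_nonneg n (Ioo_subset_Ioc_self hy)

theorem eval_one_sub_eval_fejerStep_le {d : ℝ} (hd : d ∈ Ioc 0 1) :
    (fejerStep n).eval 1 - (fejerStep n).eval d ≤ 2 / d := by
  have h_pos : ∀ y ∈ Icc d 1, 0 < y := fun y hy ↦ hd.1.trans_le hy.1
  have h_bound : (fejerStep n).eval 1 ≤ (fejerStep n).eval d + 2 * (d⁻¹ - 1⁻¹) := by
    refine image_le_of_deriv_right_le_deriv_boundary (fejerStep n).continuousOn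
      (fun y _ ↦ (hasDerivAt_fejerStep n y).hasDerivWithinAt) (by simp)
      (B := fun y ↦ (fejerStep n).eval d + 2 * (d⁻¹ - y⁻¹)) (B' := fun y ↦ 2 / y ^ 2) ?_ ?_ ?_
      (right_mem_Icc.2 hd.2)
    · exact continuousOn_const.add (continuousOn_const.mul
        (continuousOn_const.sub (continuousOn_id.inv₀ fun y hy ↦ (h_pos y hy).ne')))
    · intro y hy
      have h_inv := hasDerivAt_inv (h_pos y (Ico_subset_Icc_self hy)).ne'
      have h_deriv := ((h_inv.const_sub d⁻¹).const_mul 2).const_add ((fejerStep n).eval d)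
      exact (h_deriv.congr_deriv (by ring)).hasDerivWithinAt
    · exact fun y hy ↦
        eval_sq_fejerPoly_le n ⟨h_pos y (Ico_subset_Icc_self hy), hy.2.le⟩
  rw [div_eq_mul_inv]
  linarith

theorem half_le_eval_one_fejerStep : (n : ℝ) / 2 ≤ (fejerStep n).eval 1 := by
  have h_zero : (fejerStep n).eval 0 = 0 := (odd_eval_fejerStep n).map_zero
  rcases n.eq_zero_or_pos with rfl | hn
  · have := monotoneOn_eval_fejerStep 0 (by norm_num) (by norm_num) (zero_le_one' ℝ)
    simpa only [Nat.cast_zero, zero_div, h_zero] using this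
  have hn1 : (1 : ℝ) ≤ n := by exact_mod_cast hn
  have h_inv : 1 / (n : ℝ) ≤ 1 := (div_le_one (by linarith)).2 hn1
  have h_pos : 0 ≤ 1 / (n : ℝ) := by positivity
  have h_mvt : (n : ℝ) ^ 2 / 2 * (1 / n - 0) ≤
      (fejerStep n).eval (1 / (n : ℝ)) - (fejerStep n).eval 0 := by
    refine (convex_Icc (0 : ℝ) (1 / n)).mul_sub_le_image_sub_of_le_deriv
      (fejerStep n).continuousOn (fejerStep n).differentiableOn (fun y hy ↦ ?_)
      0 (left_mem_Icc.2 h_pos) (1 / n) (right_mem_Icc.2 h_pos) h_pos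
    rw [interior_Icc] at hy
    rw [(hasDerivAt_fejerStep n y).deriv]
    exact sq_div_two_le_eval_sq_fejerPoly ⟨hy.1, hy.2.le.trans h_inv⟩
      ((lt_div_iff₀' (by linarith)).1 hy.2).le
  calc (n : ℝ) / 2 = (n : ℝ) ^ 2 / 2 * (1 / n - 0) := by field_simp; ring
    _ ≤ (fejerStep n).eval (1 / (n : ℝ)) := by linarith
    _ ≤ (fejerStep n).eval 1 :=
      monotoneOn_eval_fejerStep n ⟨by linarith, h_inv⟩ ⟨by norm_num, le_rfl⟩ h_inv

variable {n}

theorem eval_one_fejerStep_pos (hn : 0 < n) : 0 < (fejerStep n).eval 1 :=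
  (by positivity : 0 < (n : ℝ) / 2).trans_le (half_le_eval_one_fejerStep n)

theorem one_sub_mul_eval_one_fejerStep_le {d ε : ℝ} (hd : d ∈ Ioc 0 1) (hε : 4 ≤ ε * (n * d)) :
    (1 - ε) * (fejerStep n).eval 1 ≤ (fejerStep n).eval d := by
  have hd0 := hd.1
  have hε0 : 0 ≤ ε := (pos_of_mul_pos_left (by linarith) (by positivity : 0 ≤ n * d)).le
  have h_tail : 2 / d ≤ ε * (fejerStep n).eval 1 :=
    calc 2 / d ≤ ε * (n / 2) := by
          rw [div_le_iff₀ hd0]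
          linarith
      _ ≤ ε * (fejerStep n).eval 1 := by gcongr; exact half_le_eval_one_fejerStep n
  linarith [eval_one_sub_eval_fejerStep_le n hd]

end FejerStep

section RectangleOfStep

variable {K : Type*} [Field K]

/-- The rectangle of half-width `c` made from a step `S`, as the normalised difference of two of its
translates. Halving the argument keeps the points at which `S` is evaluated inside `[-1, 1]` when
`x` and `c` range over `[-1, 1]`. -/
noncomputable def rectangleOfStep (S : K[X]) (c : K) : K[X] :=
  C (2 * S.eval 1)⁻¹ * (S.comp (C 2⁻¹ * X + C (c / 2)) - S.comp (C 2⁻¹ * X + C (-c / 2)))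

theorem natDegree_rectangleOfStep_le (S : K[X]) (c : K) :
    (rectangleOfStep S c).natDegree ≤ S.natDegree := by
  have h_comp : ∀ b : K, (S.comp (C 2⁻¹ * X + C b)).natDegree ≤ S.natDegree := fun b ↦
    natDegree_comp_le.trans (mul_le_of_le_one_right (Nat.zero_le _) natDegree_linear_le)
  exact (natDegree_C_mul_le _ _).trans
    ((natDegree_sub_le_of_le (h_comp _) (h_comp _)).trans_eq (max_self _))

theorem eval_rectangleOfStep (S : K[X]) (c x : K) :
    (rectangleOfStep S c).eval x =
      (S.eval ((x + c) / 2) - S.eval ((x - c) / 2)) / (2 * S.eval 1) := by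
  simp only [rectangleOfStep, eval_mul, eval_C, eval_sub, eval_comp, eval_add, eval_X]
  rw [div_eq_inv_mul]
  ring_nf

theorem even_eval_rectangleOfStep {S : K[X]} (hodd : Function.Odd fun y ↦ S.eval y) (c : K) :
    Function.Even fun x ↦ (rectangleOfStep S c).eval x := by
  intro x
  have h_left : S.eval ((-x + c) / 2) = -S.eval ((x - c) / 2) := by
    rw [← hodd ((x - c) / 2)]; ring_nf
  have h_right : S.eval ((-x - c) / 2) = -S.eval ((x + c) / 2) := by
    rw [← hodd ((x + c) / 2)]; ring_nf
  simp only [eval_rectangleOfStep, h_left, h_right]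
  ring

variable [LinearOrder K] [IsStrictOrderedRing K] {S : K[X]} {c δ ε x : K}

theorem eval_rectangleOfStep_mem_Icc (hodd : Function.Odd fun y ↦ S.eval y)
    (hmono : MonotoneOn (fun y ↦ S.eval y) (Icc (-1) 1)) (hS : 0 < S.eval 1)
    (hc : c ∈ Icc 0 1) (hx : x ∈ Icc (-1) 1) :
    (rectangleOfStep S c).eval x ∈ Icc 0 1 := by
  obtain ⟨hc0, hc1⟩ := hc
  obtain ⟨hx0, hx1⟩ := hx
  have h_order : S.eval ((x - c) / 2) ≤ S.eval ((x + c) / 2) :=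
    hmono ⟨by linarith, by linarith⟩ ⟨by linarith, by linarith⟩ (by linarith)
  have h_top : S.eval ((x + c) / 2) ≤ S.eval 1 :=
    hmono ⟨by linarith, by linarith⟩ ⟨by linarith, le_rfl⟩ (by linarith)
  have h_bot : -S.eval 1 ≤ S.eval ((x - c) / 2) := by
    rw [← hodd 1]
    exact hmono ⟨le_rfl, by linarith⟩ ⟨by linarith, by linarith⟩ (by linarith)
  rw [eval_rectangleOfStep]
  exact ⟨div_nonneg (by linarith) (by linarith), (div_le_one (by linarith)).2 (by linarith)⟩

theorem one_sub_le_eval_rectangleOfStep (hodd : Function.Odd fun y ↦ S.eval y)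
    (hmono : MonotoneOn (fun y ↦ S.eval y) (Icc (-1) 1)) (hS : 0 < S.eval 1)
    (hδ : 0 ≤ δ) (hSδ : (1 - ε) * S.eval 1 ≤ S.eval (δ / 2)) (hc : c ≤ 1) (hx : |x| ≤ c - δ) :
    1 - ε ≤ (rectangleOfStep S c).eval x := by
  obtain ⟨hx0, hx1⟩ := abs_le.1 hx
  have h_right : S.eval (δ / 2) ≤ S.eval ((x + c) / 2) :=
    hmono ⟨by linarith, by linarith⟩ ⟨by linarith, by linarith⟩ (by linarith)
  have h_left : S.eval ((x - c) / 2) ≤ -S.eval (δ / 2) := by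
    rw [← hodd (δ / 2)]
    exact hmono ⟨by linarith, by linarith⟩ ⟨by linarith, by linarith⟩ (by linarith)
  rw [eval_rectangleOfStep, le_div_iff₀ (by linarith)]
  linarith

theorem eval_rectangleOfStep_le (hodd : Function.Odd fun y ↦ S.eval y)
    (hmono : MonotoneOn (fun y ↦ S.eval y) (Icc (-1) 1)) (hS : 0 < S.eval 1)
    (hδ : 0 ≤ δ) (hSδ : (1 - ε) * S.eval 1 ≤ S.eval (δ / 2)) (hc : 0 ≤ c)
    (hx : |x| ∈ Icc (c + δ) 1) : (rectangleOfStep S c).eval x ≤ ε / 2 := by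
  obtain ⟨hx0, hx1⟩ := hx
  have h_right : S.eval ((|x| + c) / 2) ≤ S.eval 1 :=
    hmono ⟨by linarith, by linarith⟩ ⟨by linarith, le_rfl⟩ (by linarith)
  have h_left : S.eval (δ / 2) ≤ S.eval ((|x| - c) / 2) :=
    hmono ⟨by linarith, by linarith⟩ ⟨by linarith, by linarith⟩ (by linarith)
  have h_abs : (rectangleOfStep S c).eval x = (rectangleOfStep S c).eval |x| := by
    rcases abs_choice x with h | h <;> rw [h]
    exact (even_eval_rectangleOfStep hodd c x).symm
  rw [h_abs, eval_rectangleOfStep, div_le_iff₀ (by linarith)]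
  linarith

end RectangleOfStep

section RectanglePoly

/-- The approximation of the rectangle of half-width `c`: `n` governs the sharpness of the
transition, `k` the error away from it. -/
noncomputable def rectanglePoly (n k : ℕ) (c : ℝ) : ℝ[X] :=
  (majorityPoly ℝ k).comp (rectangleOfStep (fejerStep n) c)

theorem natDegree_rectanglePoly_le (n k : ℕ) (c : ℝ) :
    (rectanglePoly n k c).natDegree ≤ (2 * k + 1) * (2 * (n - 1) + 1) :=
  natDegree_comp_le.trans (Nat.mul_le_mul (natDegree_majorityPoly_le ℝ k)
    ((natDegree_rectangleOfStep_le _ c).trans (natDegree_fejerStep_le n)))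

theorem even_eval_rectanglePoly (n k : ℕ) (c : ℝ) :
    Function.Even fun x ↦ (rectanglePoly n k c).eval x := by
  intro x
  simp only [rectanglePoly, eval_comp]
  exact congrArg (fun y ↦ (majorityPoly ℝ k).eval y)
    (even_eval_rectangleOfStep (odd_eval_fejerStep n) c x)

variable {n : ℕ} {c δ ε x : ℝ}

theorem eval_rectangleOfStep_fejerStep_mem_Icc (hn : 0 < n) (hc : c ∈ Icc 0 1)
    (hx : x ∈ Icc (-1) 1) : (rectangleOfStep (fejerStep n) c).eval x ∈ Icc 0 1 :=
  eval_rectangleOfStep_mem_Icc (odd_eval_fejerStep n) (monotoneOn_eval_fejerStep n)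
    (eval_one_fejerStep_pos hn) hc hx

theorem eval_rectanglePoly_mem_Icc (k : ℕ) (hn : 0 < n) (hc : c ∈ Icc 0 1) (hx : x ∈ Icc (-1) 1) :
    (rectanglePoly n k c).eval x ∈ Icc 0 1 := by
  rw [rectanglePoly, eval_comp]
  exact eval_majorityPoly_mem_Icc k (eval_rectangleOfStep_fejerStep_mem_Icc hn hc hx)

theorem one_sub_le_eval_rectanglePoly (k : ℕ) (hδ : 0 < δ) (hε : 8 ≤ ε * (n * δ)) (hc : c ≤ 1)
    (hx : |x| ≤ c - δ) : 1 - 4 ^ k * ε ^ (k + 1) ≤ (rectanglePoly n k c).eval x := by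
  have hx0 := abs_nonneg x
  have hn : 0 < n := Nat.pos_of_ne_zero fun h ↦ by norm_num [h] at hε
  have h_step : 1 - ε ≤ (rectangleOfStep (fejerStep n) c).eval x :=
    one_sub_le_eval_rectangleOfStep (odd_eval_fejerStep n) (monotoneOn_eval_fejerStep n)
      (eval_one_fejerStep_pos hn) hδ.le
      (one_sub_mul_eval_one_fejerStep_le ⟨by linarith, by linarith⟩ (by linarith)) hc hx
  have h_mem := eval_rectangleOfStep_fejerStep_mem_Icc hn (c := c) ⟨by linarith, hc⟩
    (abs_le.1 (by linarith : |x| ≤ 1))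
  rw [rectanglePoly, eval_comp]
  refine le_trans ?_ (one_sub_le_eval_majorityPoly k h_mem)
  gcongr
  · exact sub_nonneg.2 h_mem.2
  · linarith

theorem eval_rectanglePoly_le (k : ℕ) (hδ : 0 < δ) (hε : 8 ≤ ε * (n * δ)) (hc : 0 ≤ c)
    (hx : |x| ∈ Icc (c + δ) 1) : (rectanglePoly n k c).eval x ≤ 4 ^ k * ε ^ (k + 1) := by
  have hcδ : c + δ ≤ 1 := hx.1.trans hx.2
  have hn : 0 < n := Nat.pos_of_ne_zero fun h ↦ by norm_num [h] at hε
  have h_step : (rectangleOfStep (fejerStep n) c).eval x ≤ ε / 2 :=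
    eval_rectangleOfStep_le (odd_eval_fejerStep n) (monotoneOn_eval_fejerStep n)
      (eval_one_fejerStep_pos hn) hδ.le
      (one_sub_mul_eval_one_fejerStep_le ⟨by linarith, by linarith⟩ (by linarith)) hc hx
  have h_mem := eval_rectangleOfStep_fejerStep_mem_Icc hn ⟨hc, by linarith⟩ (abs_le.1 hx.2)
  rw [rectanglePoly, eval_comp]
  refine (eval_majorityPoly_le k h_mem).trans ?_
  gcongr
  · exact h_mem.1
  · linarith [h_mem.1]

end RectanglePoly

section Parameters

variable {η Δ : ℝ}

theorem four_pow_mul_sixteenth_pow_floor_log_le (hη : 0 < η) :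
    4 ^ ⌊Real.log (1 / η)⌋₊ * (1 / 16 : ℝ) ^ (⌊Real.log (1 / η)⌋₊ + 1) ≤ η := by
  set k := ⌊Real.log (1 / η)⌋₊
  have h_exp : (1 / 4 : ℝ) ≤ Real.exp (-1) := by
    rw [Real.exp_neg, one_div]
    exact inv_anti₀ (Real.exp_pos 1) (by linarith [Real.exp_one_lt_three])
  calc 4 ^ k * (1 / 16 : ℝ) ^ (k + 1) ≤ 4 ^ (k + 1) * (1 / 16 : ℝ) ^ (k + 1) := by
        gcongr
        · norm_num
        · exact k.le_succ
    _ = (1 / 4 : ℝ) ^ (k + 1) := by rw [← mul_pow]; norm_num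
    _ ≤ Real.exp (-1) ^ (k + 1) := by gcongr
    _ = Real.exp (-(k + 1)) := by rw [← Real.exp_nat_mul]; push_cast; ring_nf
    _ ≤ Real.exp (-Real.log (1 / η)) := by
        gcongr
        exact (Nat.lt_floor_add_one _).le
    _ = η := by rw [one_div, Real.log_inv, neg_neg, Real.exp_log hη]

theorem floor_log_mul_ceil_le (hη : η ∈ Ioo 0 (1 / 2)) (hΔ : Δ ∈ Ioc 0 2) :
    (2 * ⌊Real.log (1 / η)⌋₊ + 1) * (2 * (⌈256 / Δ⌉₊ - 1) + 1) ≤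
      ⌈2056 * (1 / Δ) * Real.log (1 / η)⌉₊ := by
  have hΔ0 := hΔ.1
  have h_log : 1 / 2 ≤ Real.log (1 / η) := by
    have h_two : 2 ≤ 1 / η := (le_div_iff₀ hη.1).2 (by linarith [hη.2])
    linarith [Real.log_two_gt_d9, Real.log_le_log two_pos h_two]
  have h_inv : 1 / 2 ≤ 1 / Δ := one_div_le_one_div_of_le hΔ0 hΔ.2
  have h_floor : (⌊Real.log (1 / η)⌋₊ : ℝ) ≤ Real.log (1 / η) := Nat.floor_le (by linarith)
  have h_ceil : ((⌈256 / Δ⌉₊ - 1 : ℕ) : ℝ) ≤ 256 * (1 / Δ) := by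
    rw [Nat.cast_pred (Nat.ceil_pos.2 (by positivity)), mul_one_div]
    linarith [Nat.ceil_lt_add_one (by positivity : 0 ≤ 256 / Δ)]
  rw [← Nat.cast_le (α := ℝ)]
  push_cast
  calc (2 * (⌊Real.log (1 / η)⌋₊ : ℝ) + 1) * (2 * ((⌈256 / Δ⌉₊ - 1 : ℕ) : ℝ) + 1)
      ≤ (4 * Real.log (1 / η)) * (514 * (1 / Δ)) := by
        gcongr <;> linarith
    _ = 2056 * (1 / Δ) * Real.log (1 / η) := by ring
    _ ≤ ⌈2056 * (1 / Δ) * Real.log (1 / η)⌉₊ := Nat.le_ceil _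

end Parameters

theorem rectangle_polynomial_approximation_general :
    ∃ C : ℝ, 0 < C ∧
      ∀ η Δ : ℝ, η ∈ Ioo (0 : ℝ) (1 / 2) → 0 < Δ → ∀ c ≤ 1, Δ / 2 ≤ c →
        ∃ P : ℝ[X],
          P.natDegree ≤ ⌈C * (1 / Δ) * Real.log (1 / η)⌉₊ ∧
          (∀ x : ℝ, P.eval (-x) = P.eval x) ∧
          (∀ x ∈ Icc (-1 : ℝ) 1, |P.eval x| ≤ 1) ∧
          (∀ x ∈ Icc (-c + Δ / 2) (c - Δ / 2), P.eval x ∈ Icc (1 - η) 1) ∧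
          (∀ x ∈ Icc (-1 : ℝ) (-c - Δ / 2) ∪ Icc (c + Δ / 2) (1 : ℝ), P.eval x ∈ Icc (-η) η) := by
  refine ⟨2056, by norm_num, fun η Δ hη hΔ c hc hcΔ ↦ ?_⟩
  set n := ⌈256 / Δ⌉₊
  set k := ⌊Real.log (1 / η)⌋₊
  have hn : 0 < n := Nat.ceil_pos.2 (by positivity)
  have hδ : 0 < Δ / 2 := half_pos hΔ
  have hε : 8 ≤ 1 / 16 * (n * (Δ / 2)) := by
    linarith [(div_le_iff₀ hΔ).1 (Nat.le_ceil (256 / Δ))]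
  have hc0 : 0 ≤ c := by linarith
  have h_err : 4 ^ k * (1 / 16 : ℝ) ^ (k + 1) ≤ η := four_pow_mul_sixteenth_pow_floor_log_le hη.1
  have h_mem {x : ℝ} (hx : |x| ≤ 1) := eval_rectanglePoly_mem_Icc k hn ⟨hc0, hc⟩ (abs_le.1 hx)
  refine ⟨rectanglePoly n k c,
    (natDegree_rectanglePoly_le n k c).trans (floor_log_mul_ceil_le hη ⟨hΔ, by linarith⟩),
    even_eval_rectanglePoly n k c, fun x hx ↦ ?bounded, fun x hx ↦ ?inside, fun x hx ↦ ?outside⟩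
  case bounded =>
    obtain ⟨h_nonneg, h_le⟩ := h_mem (abs_le.2 hx)
    rwa [abs_of_nonneg h_nonneg]
  case inside =>
    have h_abs : |x| ≤ c - Δ / 2 := abs_le.2 ⟨by linarith [hx.1], hx.2⟩
    have h_near := one_sub_le_eval_rectanglePoly k hδ hε hc h_abs
    exact ⟨by linarith, (h_mem (by linarith)).2⟩
  case outside =>
    have h_abs : |x| ∈ Icc (c + Δ / 2) 1 :=
      abs_mem_Icc_of_mem_union (by linarith) (by rwa [neg_add'])
    have h_far := eval_rectanglePoly_le k hδ hε hc0 h_abs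
    exact ⟨by linarith [hη.1, (h_mem h_abs.2).1], h_far.trans h_err⟩

/-- There is a constant `C > 0` such that for all `η, Δ ∈ (0, 1/2)` and
`c ∈ [-1, 1]` with `c > Δ/2`, there exists an even real polynomial `P` of degree at most
`⌈C (1/Δ) log(1/η)⌉` with `|P(x)| ≤ 1` on `[-1, 1]`, `P(x) ∈ [1-η, 1]` on
`[-c + Δ/2, c - Δ/2]`, and `P(x) ∈ [-η, η]` on `[-1, -c - Δ/2] ∪ [c + Δ/2, 1]`. -/
theorem rectangle_polynomial_approximation :
    ∃ C : ℝ, 0 < C ∧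
      ∀ η Δ : ℝ, η ∈ Set.Ioo (0 : ℝ) (1 / 2) → Δ ∈ Set.Ioo (0 : ℝ) (1 / 2) →
        ∀ c ∈ Set.Icc (-1 : ℝ) 1, Δ / 2 < c →
          ∃ P : Polynomial ℝ,
            P.natDegree ≤ ⌈C * (1 / Δ) * Real.log (1 / η)⌉₊ ∧
            (∀ x : ℝ, P.eval (-x) = P.eval x) ∧
            (∀ x ∈ Set.Icc (-1 : ℝ) 1, |P.eval x| ≤ 1) ∧
            (∀ x ∈ Set.Icc (-c + Δ / 2) (c - Δ / 2), P.eval x ∈ Set.Icc (1 - η) 1) ∧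
            (∀ x ∈ Set.Icc (-1 : ℝ) (-c - Δ / 2) ∪ Set.Icc (c + Δ / 2) (1 : ℝ),
              P.eval x ∈ Set.Icc (-η) η) := by
  obtain ⟨C, hC, h⟩ := rectangle_polynomial_approximation_general
  exact ⟨C, hC, fun η Δ hη hΔ c hc hcΔ ↦ h η Δ hη hΔ.1 c hc.2 hcΔ.le⟩
end

section
/- Let E be a finite-dimensional complex inner product space, H : E → E a self-adjoint linear operator all of whose eigenvalues lie in [-1, 1], with orthonormal eigenbasis (v_i) and eigenvalues (λ_i), and let ψ ∈ E be a unit vector. Let c ∈ [-1,1], Δ > 0, η ∈ [0,1], and let P be a real polynomial with P(x) ∈ [1-η, 1] for all x ∈ [-1, c - Δ/2] and P(x) ∈ [-η, η] for all x ∈ [c + Δ/2, 1]. Assume no eigenvalue of H lies in the open interval (c - Δ/2, c + Δ/2), and let λ₀ be an eigenvalue with λ₀ ≤ c - Δ/2 and unit eigenvector v₀, with overlap χ = |⟨v₀, ψ⟩|. Then the (real) expectation value ⟨ψ, P(H)ψ⟩ satisfies ⟨ψ, P(H)ψ⟩ ≥ χ²(1 - η) - (1 - χ²)η. -/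
open scoped InnerProductSpace

/-!
In an eigenbasis `v` of `H`, the expectation `⟨ψ, P(H)ψ⟩` is the sum of the values `P(λᵢ)` with
weights `|⟨vᵢ, ψ⟩|²` of total mass `‖ψ‖²`. The distinguished eigenvalue carries weight `χ²` and
value at least `1 - η`; since no eigenvalue lies in the gap, every other value is at least `-η`.
-/

section

variable {𝕜 E ι : Type*} [RCLike 𝕜] [NormedAddCommGroup E] [InnerProductSpace 𝕜 E]

theorem isSymmetric_aeval_map_algebraMap {T : E →ₗ[𝕜] E} (hT : T.IsSymmetric)
    (p : Polynomial ℝ) : (Polynomial.aeval T (p.map (algebraMap ℝ 𝕜))).IsSymmetric := by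
  induction p using Polynomial.induction_on' with
  | add p q hp hq =>
    rw [Polynomial.map_add, map_add]
    exact hp.add hq
  | monomial n a =>
    rw [Polynomial.map_monomial, Polynomial.aeval_monomial, ← Algebra.smul_def]
    exact (hT.pow n).smul (RCLike.conj_ofReal a)

theorem aeval_map_algebraMap_apply_of_apply_eq_smul {T : E →ₗ[𝕜] E} {x : E} {r : ℝ}
    (h : T x = (r : 𝕜) • x) (p : Polynomial ℝ) :
    Polynomial.aeval T (p.map (algebraMap ℝ 𝕜)) x = ((p.eval r : ℝ) : 𝕜) • x := by
  rw [Module.End.aeval_apply_of_mem_apply_eq_smul h]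
  exact congrArg (· • x) (Polynomial.eval_map_apply (algebraMap ℝ 𝕜) r)

theorem hasSum_mul_norm_inner_sq (v : HilbertBasis ι 𝕜 E) {T : E →ₗ[𝕜] E} (hT : T.IsSymmetric)
    {μ : ι → ℝ} (hμ : ∀ i, T (v i) = (μ i : 𝕜) • v i) (x : E) :
    HasSum (fun i => μ i * ‖⟪v i, x⟫_𝕜‖ ^ 2) (RCLike.re ⟪x, T x⟫_𝕜) := by
  have hterm (i : ι) :
      RCLike.re (⟪x, v i⟫_𝕜 * ⟪v i, T x⟫_𝕜) = μ i * ‖⟪v i, x⟫_𝕜‖ ^ 2 := by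
    rw [← hT, hμ, inner_smul_left, RCLike.conj_ofReal, mul_left_comm, ← inner_conj_symm x,
      RCLike.conj_mul, RCLike.re_ofReal_mul, ← RCLike.ofReal_pow, RCLike.ofReal_re]
  simpa only [hterm] using RCLike.hasSum_re 𝕜 (v.hasSum_inner_mul_inner x (T x))

theorem hasSum_norm_inner_sq (v : HilbertBasis ι 𝕜 E) (x : E) :
    HasSum (fun i => ‖⟪v i, x⟫_𝕜‖ ^ 2) (‖x‖ ^ 2) := by
  simpa using hasSum_mul_norm_inner_sq v LinearMap.IsSymmetric.id (μ := 1) (by simp) x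

theorem mul_norm_inner_sq_add_le_re_inner (v : HilbertBasis ι 𝕜 E) {T : E →ₗ[𝕜] E}
    (hT : T.IsSymmetric) {μ : ι → ℝ} (hμ : ∀ i, T (v i) = (μ i : 𝕜) • v i) {m : ℝ}
    (hm : ∀ i, m ≤ μ i) (i₀ : ι) (x : E) :
    μ i₀ * ‖⟪v i₀, x⟫_𝕜‖ ^ 2 + m * (‖x‖ ^ 2 - ‖⟪v i₀, x⟫_𝕜‖ ^ 2) ≤ RCLike.re ⟪x, T x⟫_𝕜 := by
  have hsum : HasSum (fun i => (μ i - m) * ‖⟪v i, x⟫_𝕜‖ ^ 2)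
      (RCLike.re ⟪x, T x⟫_𝕜 - m * ‖x‖ ^ 2) := by
    simpa only [sub_mul] using
      (hasSum_mul_norm_inner_sq v hT hμ x).sub ((hasSum_norm_inner_sq v x).mul_left m)
  have hsingle : (μ i₀ - m) * ‖⟪v i₀, x⟫_𝕜‖ ^ 2 ≤ RCLike.re ⟪x, T x⟫_𝕜 - m * ‖x‖ ^ 2 :=
    le_hasSum hsum i₀ fun i _ => mul_nonneg (sub_nonneg.mpr (hm i)) (sq_nonneg _)
  linarith

theorem expectation_ge_of_low_eigenvalue_general {H : E →ₗ[𝕜] E} (hH : H.IsSymmetric)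
    (v : HilbertBasis ι 𝕜 E) {lam : ι → ℝ} (hEig : ∀ i, H (v i) = (lam i : 𝕜) • v i)
    {a b r s η : ℝ} (hspec : ∀ i, lam i ∈ Set.Icc a b) {P : Polynomial ℝ}
    (hP₁ : ∀ x ∈ Set.Icc a r, 1 - η ≤ P.eval x) (hP₂ : ∀ x ∈ Set.Icc s b, -η ≤ P.eval x)
    (hgap : ∀ i, lam i ∉ Set.Ioo r s) {i₀ : ι} (hi₀ : lam i₀ ≤ r) (ψ : E) :
    ‖⟪v i₀, ψ⟫_𝕜‖ ^ 2 * (1 - η) - (‖ψ‖ ^ 2 - ‖⟪v i₀, ψ⟫_𝕜‖ ^ 2) * η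
      ≤ RCLike.re ⟪ψ, Polynomial.aeval H (P.map (algebraMap ℝ 𝕜)) ψ⟫_𝕜 := by
  have hlow {i : ι} (hi : lam i ≤ r) : 1 - η ≤ P.eval (lam i) := hP₁ _ ⟨(hspec i).1, hi⟩
  have hall (i : ι) : -η ≤ P.eval (lam i) := by
    rcases le_or_gt (lam i) r with hi | hi
    · linarith [hlow hi]
    · have hs : s ≤ lam i := not_lt.mp fun h => hgap i ⟨hi, h⟩
      exact hP₂ _ ⟨hs, (hspec i).2⟩
  calc
    _ = (1 - η) * ‖⟪v i₀, ψ⟫_𝕜‖ ^ 2 + -η * (‖ψ‖ ^ 2 - ‖⟪v i₀, ψ⟫_𝕜‖ ^ 2) := by ring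
    _ ≤ P.eval (lam i₀) * ‖⟪v i₀, ψ⟫_𝕜‖ ^ 2 + -η * (‖ψ‖ ^ 2 - ‖⟪v i₀, ψ⟫_𝕜‖ ^ 2) := by
      gcongr
      exact hlow hi₀
    _ ≤ _ := mul_norm_inner_sq_add_le_re_inner v (isSymmetric_aeval_map_algebraMap hH P)
      (fun i => aeval_map_algebraMap_apply_of_apply_eq_smul (hEig i) P) hall i₀ ψ

end

/-- (Case (2) of the dequantized GSEE analysis.)
With `H` self-adjoint, orthonormal eigenbasis `v` and eigenvalues `lam ∈ [-1,1]`, unit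
vector `ψ`, a polynomial `P` approximating the shifted sign function with threshold `c`,
gap `Δ` and error `η`, no eigenvalue in `(c - Δ/2, c + Δ/2)`, and an eigenvalue
`lam i₀ ≤ c - Δ/2` whose eigenvector has overlap `χ` with `ψ`, the real expectation value
satisfies `⟨ψ, P(H)ψ⟩ ≥ χ²(1 - η) - (1 - χ²)η`. -/
theorem expectation_ge_of_low_eigenvalue
    {E : Type*} [NormedAddCommGroup E] [InnerProductSpace ℂ E] [FiniteDimensional ℂ E]
    (H : E →ₗ[ℂ] E) (hH : ∀ x y : E, ⟪H x, y⟫_ℂ = ⟪x, H y⟫_ℂ)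
    {ι : Type*} [Fintype ι] (v : OrthonormalBasis ι ℂ E) (lam : ι → ℝ)
    (hEig : ∀ i, H (v i) = (lam i : ℂ) • v i)
    (hspec : ∀ i, lam i ∈ Set.Icc (-1 : ℝ) 1)
    (ψ : E) (hψ : ‖ψ‖ = 1)
    (c Δ η : ℝ) (hc : c ∈ Set.Icc (-1 : ℝ) 1) (hΔ : 0 < Δ) (hη : η ∈ Set.Icc (0 : ℝ) 1)
    (P : Polynomial ℝ)
    (hP₁ : ∀ x ∈ Set.Icc (-1 : ℝ) (c - Δ / 2), P.eval x ∈ Set.Icc (1 - η) 1)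
    (hP₂ : ∀ x ∈ Set.Icc (c + Δ / 2) (1 : ℝ), P.eval x ∈ Set.Icc (-η) η)
    (hgap : ∀ i, lam i ∉ Set.Ioo (c - Δ / 2) (c + Δ / 2))
    (i₀ : ι) (hi₀ : lam i₀ ≤ c - Δ / 2)
    (χ : ℝ) (hχ : χ = ‖⟪v i₀, ψ⟫_ℂ‖) :
    χ ^ 2 * (1 - η) - (1 - χ ^ 2) * η
      ≤ (⟪ψ, (Polynomial.aeval H (P.map (algebraMap ℝ ℂ))) ψ⟫_ℂ).re := by
  simpa [hψ, hχ] using expectation_ge_of_low_eigenvalue_general hH v.toHilbertBasis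
    (by simpa using hEig) hspec (fun x hx => (hP₁ x hx).1) (fun x hx => (hP₂ x hx).1) hgap hi₀ ψ
end

section
/- Let E be a finite-dimensional complex inner product space, H : E → E a self-adjoint linear operator all of whose eigenvalues lie in [-1, 1], and ψ ∈ E. Then for every natural number k, the Chebyshev vector t_k = T_k(H)ψ satisfies ‖t_k‖ ≤ ‖ψ‖; in particular the norms of the Chebyshev vectors do not grow with k. -/
open scoped InnerProductSpace

/-!
The eigenspaces of a self-adjoint operator `H` are mutually orthogonal and, in finite dimension,
span the whole space. On the eigenspace of `μ` the operator `T_k(H)` is multiplication by `T_k(μ)`,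
and `|T_k(μ)| ≤ 1` because `T_k(cos θ) = cos (kθ)`. By Pythagoras, an operator which preserves the
summands of an orthogonal decomposition and does not increase norms on any of them does not increase
norms at all.
-/

open Module.End Polynomial

section

variable {𝕜 E F ι : Type*} [RCLike 𝕜] [NormedAddCommGroup E] [InnerProductSpace 𝕜 E]
  [NormedAddCommGroup F] [InnerProductSpace 𝕜 F]

theorem sq_norm_sum_of_orthogonalFamily {V : ι → Submodule 𝕜 E}
    (hV : OrthogonalFamily 𝕜 (fun i => V i) fun i => (V i).subtypeₗᵢ)
    {v : ι → E} (hv : ∀ i, v i ∈ V i) (s : Finset ι) :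
    ‖∑ i ∈ s, v i‖ ^ 2 = ∑ i ∈ s, ‖v i‖ ^ 2 :=
  hV.norm_sum (fun i => ⟨v i, hv i⟩) s

theorem norm_map_le_of_mem_iSup_of_orthogonalFamily {V : ι → Submodule 𝕜 E}
    {W : ι → Submodule 𝕜 F}
    (hV : OrthogonalFamily 𝕜 (fun i => V i) fun i => (V i).subtypeₗᵢ)
    (hW : OrthogonalFamily 𝕜 (fun i => W i) fun i => (W i).subtypeₗᵢ)
    {A : E →ₗ[𝕜] F} (hA : ∀ i, ∀ v ∈ V i, A v ∈ W i)
    {C : ℝ} (hC : 0 ≤ C) (hAC : ∀ i, ∀ v ∈ V i, ‖A v‖ ≤ C * ‖v‖)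
    {x : E} (hx : x ∈ ⨆ i, V i) :
    ‖A x‖ ≤ C * ‖x‖ := by
  obtain ⟨v, hv, rfl⟩ := (Submodule.mem_iSup_iff_exists_finsupp V x).mp hx
  refine le_of_sq_le_sq ?_ (by positivity)
  calc ‖A (∑ i ∈ v.support, v i)‖ ^ 2
      = ∑ i ∈ v.support, ‖A (v i)‖ ^ 2 := by
        rw [map_sum, sq_norm_sum_of_orthogonalFamily hW fun i => hA i _ (hv i)]
    _ ≤ ∑ i ∈ v.support, (C * ‖v i‖) ^ 2 := by
        gcongr with i
        exact hAC i _ (hv i)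
    _ = (C * ‖∑ i ∈ v.support, v i‖) ^ 2 := by
        simp only [mul_pow, sq_norm_sum_of_orthogonalFamily hV hv, Finset.mul_sum]

theorem norm_aeval_apply_le_of_mem_iSup_eigenspace {H : E →ₗ[𝕜] E}
    (hH : OrthogonalFamily 𝕜 (fun μ => eigenspace H μ) fun μ => (eigenspace H μ).subtypeₗᵢ)
    {p : 𝕜[X]} {C : ℝ} (hC : 0 ≤ C) (hp : ∀ μ, HasEigenvalue H μ → ‖p.eval μ‖ ≤ C)
    {x : E} (hx : x ∈ ⨆ μ, eigenspace H μ) :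
    ‖aeval H p x‖ ≤ C * ‖x‖ := by
  have aeval_eq_smul (μ : 𝕜) (v : E) (hv : v ∈ eigenspace H μ) : aeval H p v = p.eval μ • v :=
    aeval_apply_of_mem_apply_eq_smul (mem_eigenspace_iff.mp hv)
  refine norm_map_le_of_mem_iSup_of_orthogonalFamily hH hH (fun μ v hv => ?_) hC
    (fun μ v hv => ?_) hx
  · rw [aeval_eq_smul μ v hv]
    exact Submodule.smul_mem _ _ hv
  · rcases eq_or_ne v 0 with rfl | hv₀
    · simp
    · rw [aeval_eq_smul μ v hv, norm_smul]
      gcongr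
      exact hp μ (hasEigenvalue_of_hasEigenvector ⟨hv, hv₀⟩)

theorem iSup_eigenspace_eq_top_of_isSymmetric [FiniteDimensional 𝕜 E] {H : E →ₗ[𝕜] E}
    (hH : H.IsSymmetric) : ⨆ μ, eigenspace H μ = ⊤ :=
  Submodule.orthogonal_eq_bot_iff.mp hH.orthogonalComplement_iSup_eigenspaces_eq_bot

theorem norm_eval_chebyshevT_ofReal_le_one (k : ℤ) {x : ℝ} (hx : |x| ≤ 1) :
    ‖(Chebyshev.T 𝕜 k).eval (x : 𝕜)‖ ≤ 1 := by
  rw [← RCLike.algebraMap_eq_ofReal, ← Chebyshev.algebraMap_eval_T, norm_algebraMap',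
    Real.norm_eq_abs]
  exact Chebyshev.abs_eval_T_real_le_one k hx

theorem chebyshev_vector_norm_le_general (H : E →ₗ[𝕜] E) (hH : H.IsSymmetric)
    (hspec : ∀ μ : ℝ, HasEigenvalue H (μ : 𝕜) → μ ∈ Set.Icc (-1 : ℝ) 1)
    (ψ : E) (hψ : ψ ∈ ⨆ μ, eigenspace H μ) (k : ℤ) :
    ‖aeval H (Chebyshev.T 𝕜 k) ψ‖ ≤ ‖ψ‖ := by
  have norm_eval_le (μ : 𝕜) (hμ : HasEigenvalue H μ) : ‖(Chebyshev.T 𝕜 k).eval μ‖ ≤ 1 := by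
    obtain ⟨r, rfl⟩ := RCLike.conj_eq_iff_real.mp (hH.conj_eigenvalue_eq_self hμ)
    exact norm_eval_chebyshevT_ofReal_le_one k (abs_le.mpr (hspec r hμ))
  simpa only [one_mul] using norm_aeval_apply_le_of_mem_iSup_eigenspace
    hH.orthogonalFamily_eigenspaces zero_le_one norm_eval_le hψ

end

/-- If `H` is self-adjoint on a finite-dimensional complex inner product
space with all eigenvalues in `[-1, 1]`, then for every `k` the Chebyshev vector
`t_k = T_k(H)ψ` satisfies `‖t_k‖ ≤ ‖ψ‖`. -/
theorem chebyshev_vector_norm_le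
    {E : Type*} [NormedAddCommGroup E] [InnerProductSpace ℂ E] [FiniteDimensional ℂ E]
    (H : E →ₗ[ℂ] E) (hH : ∀ x y : E, ⟪H x, y⟫_ℂ = ⟪x, H y⟫_ℂ)
    (hspec : ∀ μ : ℝ, Module.End.HasEigenvalue H (μ : ℂ) → μ ∈ Set.Icc (-1 : ℝ) 1)
    (ψ : E) (k : ℕ) :
    ‖(Polynomial.aeval H ((Polynomial.Chebyshev.T ℝ k).map (algebraMap ℝ ℂ))) ψ‖ ≤ ‖ψ‖ := by
  rw [Chebyshev.map_T]
  exact chebyshev_vector_norm_le_general H hH hspec ψ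
    (iSup_eigenspace_eq_top_of_isSymmetric hH ▸ Submodule.mem_top) k
end

section
/- Let E be a finite-dimensional complex inner product space, H : E → E a self-adjoint linear operator, ψ ∈ E a unit vector, and t_k = T_k(H)ψ the Chebyshev vectors. Let d be a natural number, let a₀, a₁, …, a_d be real coefficients with |a_k| ≤ 4/π for 1 ≤ k ≤ d, and set P = a₀/2 + Σ_{k=1}^d a_k T_k (a real polynomial). For arbitrary vectors t̃_1, …, t̃_d ∈ E with approximation errors Δ^{(k)} = ‖t_k - t̃_k‖, the approximate filter expectation satisfies |⟨ψ, P(H)ψ⟩ - a₀/2 - Σ_{k=1}^d a_k ⟨ψ, t̃_k⟩| ≤ (4/π) · Σ_{k=1}^d Δ^{(k)}. -/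
open scoped InnerProductSpace

/-! By linearity the error of the approximate expectation is the single inner product
`⟪ψ, ∑ k, a k • (t k - t̃ k)⟫`, the constant term being reproduced exactly. Cauchy–Schwarz reduces
its size to that of the vector on the right, which the triangle inequality bounds. -/

section

open Polynomial

theorem aeval_C_add_sum_C_mul_apply {R M ι : Type*} [CommSemiring R] [AddCommMonoid M] [Module R M]
    (H : Module.End R M) (x : M) (s : Finset ι) (b : R) (a : ι → R) (p : ι → R[X]) :
    aeval H (C b + ∑ i ∈ s, C (a i) * p i) x = b • x + ∑ i ∈ s, a i • aeval H (p i) x := by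
  simp only [map_add, map_sum, map_mul, aeval_C, LinearMap.add_apply, LinearMap.sum_apply,
    Module.End.mul_apply, Module.algebraMap_end_apply]

theorem norm_sum_smul_le_mul_sum_norm {𝕜 E ι : Type*} [SeminormedRing 𝕜]
    [SeminormedAddCommGroup E] [Module 𝕜 E] [IsBoundedSMul 𝕜 E] {s : Finset ι} {c : ι → 𝕜}
    {K : ℝ} (hc : ∀ i ∈ s, ‖c i‖ ≤ K) (v : ι → E) :
    ‖∑ i ∈ s, c i • v i‖ ≤ K * ∑ i ∈ s, ‖v i‖ := by
  rw [Finset.mul_sum]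
  exact norm_sum_le_of_le s fun i hi ↦ (norm_smul_le _ _).trans <| by gcongr; exact hc i hi

variable {𝕜 E ι : Type*} [RCLike 𝕜] [SeminormedAddCommGroup E] [InnerProductSpace 𝕜 E]

theorem inner_aeval_sub_eq_inner_sum_smul_sub (H : Module.End 𝕜 E) (φ ψ : E) (s : Finset ι)
    (b : 𝕜) (a : ι → 𝕜) (p : ι → 𝕜[X]) (v : ι → E) :
    ⟪φ, aeval H (C b + ∑ i ∈ s, C (a i) * p i) ψ⟫_𝕜 - b * ⟪φ, ψ⟫_𝕜 - ∑ i ∈ s, a i * ⟪φ, v i⟫_𝕜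
      = ⟪φ, ∑ i ∈ s, a i • (aeval H (p i) ψ - v i)⟫_𝕜 := by
  rw [aeval_C_add_sum_C_mul_apply]
  simp only [inner_add_right, inner_sum, inner_smul_right, inner_sub_right, mul_sub,
    Finset.sum_sub_distrib, add_sub_cancel_left]

theorem approximate_filter_expectation_error_general (H : Module.End 𝕜 E) (φ ψ : E)
    {s : Finset ι} (b : 𝕜) {a : ι → 𝕜} {K : ℝ} (ha : ∀ i ∈ s, ‖a i‖ ≤ K) (p : ι → 𝕜[X])
    (v : ι → E) :
    ‖⟪φ, aeval H (C b + ∑ i ∈ s, C (a i) * p i) ψ⟫_𝕜 - b * ⟪φ, ψ⟫_𝕜 - ∑ i ∈ s, a i * ⟪φ, v i⟫_𝕜‖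
      ≤ ‖φ‖ * (K * ∑ i ∈ s, ‖aeval H (p i) ψ - v i‖) := by
  rw [inner_aeval_sub_eq_inner_sum_smul_sub]
  calc ‖⟪φ, ∑ i ∈ s, a i • (aeval H (p i) ψ - v i)⟫_𝕜‖
    _ ≤ ‖φ‖ * ‖∑ i ∈ s, a i • (aeval H (p i) ψ - v i)‖ := norm_inner_le_norm _ _
    _ ≤ ‖φ‖ * (K * ∑ i ∈ s, ‖aeval H (p i) ψ - v i‖) := by
      gcongr
      exact norm_sum_smul_le_mul_sum_norm ha _

end

/-- (Key estimate of Theorem 2.) For `H` self-adjoint, a unit vector `ψ`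
with Chebyshev vectors `t_k = T_k(H)ψ`, real coefficients `a k` with `|a k| ≤ 4/π` for
`1 ≤ k ≤ d`, the polynomial `P = a₀/2 + Σ_{k=1}^d a_k T_k`, and arbitrary approximate
vectors `t̃_k` with errors `Δ^{(k)} = ‖t_k - t̃_k‖`, one has
`|⟨ψ, P(H)ψ⟩ - a₀/2 - Σ_{k=1}^d a_k ⟨ψ, t̃_k⟩| ≤ (4/π) Σ_{k=1}^d Δ^{(k)}`. -/
theorem approximate_filter_expectation_error
    {E : Type*} [NormedAddCommGroup E] [InnerProductSpace ℂ E] [FiniteDimensional ℂ E]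
    (H : E →ₗ[ℂ] E) (hH : ∀ x y : E, ⟪H x, y⟫_ℂ = ⟪x, H y⟫_ℂ)
    (ψ : E) (hψ : ‖ψ‖ = 1)
    (t : ℕ → E)
    (ht : ∀ k : ℕ,
      t k = (Polynomial.aeval H ((Polynomial.Chebyshev.T ℝ k).map (algebraMap ℝ ℂ))) ψ)
    (d : ℕ) (a : ℕ → ℝ)
    (hcoef : ∀ k, 1 ≤ k → k ≤ d → |a k| ≤ 4 / Real.pi)
    (P : Polynomial ℝ)
    (hPdef : P = Polynomial.C (a 0 / 2)
      + ∑ k ∈ Finset.Icc 1 d, Polynomial.C (a k) * Polynomial.Chebyshev.T ℝ k)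
    (ttil : ℕ → E) (Δ : ℕ → ℝ) (hΔ : ∀ k, Δ k = ‖t k - ttil k‖) :
    ‖⟪ψ, (Polynomial.aeval H (P.map (algebraMap ℝ ℂ))) ψ⟫_ℂ
        - (a 0 / 2 : ℂ) - ∑ k ∈ Finset.Icc 1 d, (a k : ℂ) * ⟪ψ, ttil k⟫_ℂ‖
      ≤ (4 / Real.pi) * ∑ k ∈ Finset.Icc 1 d, Δ k := by
  have hP : P.map (algebraMap ℝ ℂ) = Polynomial.C (a 0 / 2 : ℂ) + ∑ k ∈ Finset.Icc 1 d,
      Polynomial.C (a k : ℂ) * (Polynomial.Chebyshev.T ℝ k).map (algebraMap ℝ ℂ) := by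
    simp [hPdef, Polynomial.map_sum]
  have ha : ∀ k ∈ Finset.Icc 1 d, ‖(a k : ℂ)‖ ≤ 4 / Real.pi := by simpa using hcoef
  simpa only [hP, ht, hΔ, hψ, inner_self_eq_one_of_norm_eq_one, mul_one, one_mul] using
    approximate_filter_expectation_error_general H ψ ψ (a 0 / 2 : ℂ) ha
      (fun k ↦ (Polynomial.Chebyshev.T ℝ k).map (algebraMap ℝ ℂ)) ttil
end

section
/- Let V be a complex vector space (or module over a commutative ring), H : V → V a linear operator, and (η_k)_{k≥1} a sequence of vectors in V. Define the error sequence (e_k) by e₀ = 0, e₁ = η₁, and e_k = 2H e_{k-1} - e_{k-2} + η_k for k ≥ 2. Then for every k ≥ 1, e_k = Σ_{j=1}^k U_{k-j}(H) η_j, where U_m denotes the m-th Chebyshev polynomial of the second kind applied to H via the polynomial functional calculus. -/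
/-!
The recurrence is linear, so `e` is the superposition of the responses to the individual errors
`η j`. The response to a unit error at time `j`, observed at time `k`, is the fundamental solution
of the homogeneous recurrence at time `k - j + 1` (Duhamel's principle), and for the coefficients
`2H` and `-1` this fundamental solution is `U_{k-j}(H)`.
-/

open Finset Polynomial

section Duhamel

variable {S : Type*} [Semiring S]

/-- The fundamental solution of the two-term recurrence `x (n + 2) = a * x (n + 1) + b * x n`, i.e.
the solution with initial values `0, 1`; it is the response of the recurrence to a unit impulse.
Coefficients act from the left, and `S` need not be commutative, so that `a` and `b` may be
operators. -/
def fundamentalSolution (a b : S) : ℕ → S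
  | 0 => 0
  | 1 => 1
  | n + 2 => a * fundamentalSolution a b (n + 1) + b * fundamentalSolution a b n

variable {V : Type*} [AddCommMonoid V] [Module S V]

/-- The response at time `k` of the recurrence `x (n + 2) = a • x (n + 1) + b • x n` to the forcing
terms `η 1, …, η k`. The impulse `η j` has age `k - j` and contributes the fundamental solution at
`k - j + 1`, written `k + 1 - j`; the index is shifted because the fundamental solution starts
with `0`. -/
def forcedResponse (a b : S) (η : ℕ → V) (k : ℕ) : V :=
  ∑ j ∈ Icc 1 k, fundamentalSolution a b (k + 1 - j) • η j

variable (a b : S) (η : ℕ → V)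

theorem forcedResponse_zero : forcedResponse a b η 0 = 0 := by
  simp [forcedResponse]

theorem forcedResponse_one : forcedResponse a b η 1 = η 1 := by
  simp [forcedResponse, fundamentalSolution]

theorem forcedResponse_eq_sum_Icc_succ (n : ℕ) :
    forcedResponse a b η n = ∑ j ∈ Icc 1 (n + 1), fundamentalSolution a b (n + 1 - j) • η j := by
  simp [forcedResponse, sum_Icc_succ_top, fundamentalSolution]

theorem forcedResponse_add_two (n : ℕ) :
    forcedResponse a b η (n + 2) =
      a • forcedResponse a b η (n + 1) + b • forcedResponse a b η n + η (n + 2) := by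
  have age_recurrence : ∀ j ∈ Icc 1 (n + 1),
      fundamentalSolution a b (n + 3 - j) • η j =
        a • fundamentalSolution a b (n + 2 - j) • η j +
          b • fundamentalSolution a b (n + 1 - j) • η j := by
    intro j hj
    obtain ⟨m, hm⟩ := Nat.exists_eq_add_of_le (mem_Icc.mp hj).2
    rw [show n + 3 - j = m + 2 by omega, show n + 2 - j = m + 1 by omega,
      show n + 1 - j = m by omega, fundamentalSolution, add_smul, mul_smul, mul_smul]
  calc forcedResponse a b η (n + 2)
      = ∑ j ∈ Icc 1 (n + 1), fundamentalSolution a b (n + 3 - j) • η j + η (n + 2) := by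
        simp [forcedResponse, sum_Icc_succ_top (show 1 ≤ n + 1 + 1 by omega), fundamentalSolution]
    _ = a • forcedResponse a b η (n + 1) + b • forcedResponse a b η n + η (n + 2) := by
        rw [sum_congr rfl age_recurrence, sum_add_distrib, ← smul_sum, ← smul_sum,
          forcedResponse_eq_sum_Icc_succ a b η n, forcedResponse]

variable {a b η}

theorem eq_forcedResponse_of_recurrence {e : ℕ → V} (he0 : e 0 = 0) (he1 : e 1 = η 1)
    (hrec : ∀ n, e (n + 2) = a • e (n + 1) + b • e n + η (n + 2)) (k : ℕ) :
    e k = forcedResponse a b η k := by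
  induction k using Nat.twoStepInduction with
  | zero => rw [he0, forcedResponse_zero]
  | one => rw [he1, forcedResponse_one]
  | more n ih ih_succ => rw [hrec, ih, ih_succ, forcedResponse_add_two]

end Duhamel

theorem aeval_chebyshevU_eq_fundamentalSolution (R : Type*) {A : Type*} [CommRing R] [Ring A]
    [Algebra R A] (x : A) (n : ℕ) :
    aeval x (Chebyshev.U R n) = fundamentalSolution (2 * x) (-1) (n + 1) := by
  induction n using Nat.twoStepInduction with
  | zero => simp [fundamentalSolution]
  | one => simp [fundamentalSolution, map_ofNat (aeval x) 2]
  | more n ih ih_succ =>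
    rw [fundamentalSolution, ← ih, ← ih_succ]
    push_cast
    simp [Chebyshev.U_add_two, map_ofNat (aeval x) 2, sub_eq_add_neg]

/-- (Closed form of the Chebyshev error recurrence.) Over a module `V`
over a commutative ring `R`, with `H : V → V` linear and local errors `η_k`, the error
sequence `e₀ = 0`, `e₁ = η₁`, `e_k = 2H e_{k-1} - e_{k-2} + η_k` (k ≥ 2) satisfies
`e_k = Σ_{j=1}^k U_{k-j}(H) η_j` for all `k ≥ 1`. -/
theorem chebyshev_error_recurrence_closed_form
    {R : Type*} [CommRing R] {V : Type*} [AddCommGroup V] [Module R V]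
    (H : V →ₗ[R] V) (η : ℕ → V) (e : ℕ → V)
    (he0 : e 0 = 0) (he1 : e 1 = η 1)
    (hrec : ∀ k : ℕ, 2 ≤ k → e k = 2 • H (e (k - 1)) - e (k - 2) + η k) :
    ∀ k : ℕ, 1 ≤ k →
      e k = ∑ j ∈ Finset.Icc 1 k,
        (Polynomial.aeval H (Polynomial.Chebyshev.U R ((k - j : ℕ) : ℤ))) (η j) := by
  intro k _
  have hforced : ∀ n,
      e (n + 2) = (2 * H) • e (n + 1) + (-1 : Module.End R V) • e n + η (n + 2) := by
    intro n
    simpa [mul_smul, ofNat_smul_eq_nsmul, sub_eq_add_neg] using hrec (n + 2) (by omega)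
  rw [eq_forcedResponse_of_recurrence he0 he1 hforced k, forcedResponse]
  refine sum_congr rfl fun j hj => ?_
  rw [aeval_chebyshevU_eq_fundamentalSolution, ← Nat.sub_add_comm (mem_Icc.mp hj).2,
    Module.End.smul_def]
end

section
/- Let E be a finite-dimensional complex inner product space, H : E → E a self-adjoint linear operator all of whose eigenvalues lie in [-1, 1], and (η_k)_{k≥1} a sequence of vectors in E. Define the error sequence (e_k) by e₀ = 0, e₁ = η₁, and e_k = 2H e_{k-1} - e_{k-2} + η_k for k ≥ 2. Then for every k ≥ 1, ‖e_k‖ ≤ Σ_{j=1}^k (k - j + 1) · ‖η_j‖; in particular, if ‖η_j‖ ≤ δ for all j, then ‖e_k‖ ≤ δ · k(k+1)/2. -/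
open scoped InnerProductSpace

/-!
By Duhamel's principle `e k = ∑ j ∈ Icc 1 k, U_{k - j}(H) (η j)`, with `U` the Chebyshev polynomials
of the second kind, so everything rests on `‖U_m(H)‖ ≤ m + 1`. This holds for every symmetric
contraction `H`: the Pell identity `T_{n+1}² + U_n² = 1 + (X U_n)²` evaluated at `H` gives
`‖T_{n+1}(H) v‖² + ‖U_n(H) v‖² = ‖v‖² + ‖H (U_n(H) v)‖²`, so `T_{n+1}(H)` is a contraction because
`H` is one, and the bound follows by induction from `U_{n+1} = X U_n + T_{n+1}`. The spectral
theorem only serves to turn the eigenvalue condition into `‖H‖ ≤ 1`.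
-/

section

open Finset Polynomial Polynomial.Chebyshev

section Recurrence

variable {R M : Type*} [Ring R] [AddCommGroup M] [Module R M]

lemma aeval_U_add_two_apply (H : Module.End R M) (n : ℤ) (v : M) :
    aeval H (U ℤ (n + 2)) v = 2 • H (aeval H (U ℤ (n + 1)) v) - aeval H (U ℤ n) v := by
  simp [U_add_two, two_mul, two_smul]

lemma eq_sum_aeval_U_of_recurrence {H : Module.End R M} {η e : ℕ → M}
    (he0 : e 0 = 0) (he1 : e 1 = η 1)
    (hrec : ∀ k, e (k + 2) = 2 • H (e (k + 1)) - e k + η (k + 2)) (k : ℕ) :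
    e k = ∑ j ∈ Icc 1 k, aeval H (U ℤ (k - j)) (η j) := by
  induction k using Nat.twoStepInduction with
  | zero => simp [he0]
  | one => simp [he1]
  | more k ih₀ ih₁ =>
    -- The additional summand `j = k + 1` vanishes because `U_{-1} = 0`.
    have sum_extended : e k = ∑ j ∈ Icc 1 (k + 1), aeval H (U ℤ (k - j)) (η j) := by
      simp [sum_Icc_succ_top, ih₀]
    have U_step (j : ℕ) : aeval H (U ℤ ((k + 2 : ℕ) - j)) (η j) =
        2 • H (aeval H (U ℤ ((k + 1 : ℕ) - j)) (η j)) - aeval H (U ℤ (k - j)) (η j) := by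
      convert aeval_U_add_two_apply H (k - j) (η j) using 5 <;> push_cast <;> ring_nf
    calc e (k + 2)
        = ∑ j ∈ Icc 1 (k + 1), (2 • H (aeval H (U ℤ ((k + 1 : ℕ) - j)) (η j)) -
            aeval H (U ℤ (k - j)) (η j)) + η (k + 2) := by
          rw [hrec, sum_extended, ih₁, sum_sub_distrib, ← smul_sum, ← map_sum]
      _ = ∑ j ∈ Icc 1 (k + 2), aeval H (U ℤ ((k + 2 : ℕ) - j)) (η j) := by
          rw [sum_congr rfl fun j _ ↦ (U_step j).symm, sum_Icc_succ_top (by omega : 1 ≤ k + 2),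
            sub_self, U_zero, map_one, Module.End.one_apply]

end Recurrence

lemma T_add_one_sq_add_U_sq (R : Type*) [CommRing R] (n : ℤ) :
    T R (n + 1) ^ 2 + U R n ^ 2 = 1 + (X * U R n) ^ 2 := by
  have pell : U R n ^ 2 + U R (n + 1) ^ 2 - 2 * X * U R n * U R (n + 1) = 1 := by
    have S_identity := congr_arg (fun p ↦ p.comp (2 * X)) (S_sq_add_S_sq R n)
    simpa [S_comp_two_mul_X] using S_identity
  linear_combination pell + (X * U R n - T R (n + 1) - U R (n + 1)) * U_eq_X_mul_U_add_T R n

lemma sum_Icc_one_sub_add_one (K : Type*) [Field K] [NeZero (2 : K)] (k : ℕ) :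
    ∑ j ∈ Icc 1 k, ((k : K) - j + 1) = k * (k + 1) / 2 := by
  induction k with
  | zero => simp
  | succ k ih =>
    calc ∑ j ∈ Icc 1 (k + 1), (((k + 1 : ℕ) : K) - j + 1)
        = ∑ j ∈ Icc 1 k, ((k - j + 1 : K) + 1) + 1 := by
          rw [sum_Icc_succ_top (by omega), sub_self, zero_add]
          simp only [Nat.cast_add_one, sub_add_eq_add_sub]
      _ = k * (k + 1) / 2 + k + 1 := by rw [sum_add_distrib, ih]; simp
      _ = (k + 1 : ℕ) * ((k + 1 : ℕ) + 1) / 2 := by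
          have : (2 : K) ≠ 0 := two_ne_zero
          push_cast
          field

section SymmetricContraction

variable {𝕜 E : Type*} [RCLike 𝕜] [SeminormedAddCommGroup E] [InnerProductSpace 𝕜 E]
  {H : Module.End 𝕜 E}

-- Real coefficients would do, but integer ones need no `ℝ`-module structure on `E`.
lemma isSymmetric_aeval (hH : H.IsSymmetric) (p : ℤ[X]) : (aeval H p).IsSymmetric := by
  induction p using Polynomial.induction_on' with
  | add p q hp hq => simpa using hp.add hq
  | monomial n a =>
    rw [aeval_monomial]
    simpa using (LinearMap.IsSymmetric.intCast a).mul_of_commute (hH.pow n) (Int.cast_commute a _)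

lemma norm_aeval_apply_sq (hH : H.IsSymmetric) (p : ℤ[X]) (v : E) :
    ‖aeval H p v‖ ^ 2 = RCLike.re ⟪aeval H (p ^ 2) v, v⟫_𝕜 := by
  rw [sq p, map_mul, Module.End.mul_apply, isSymmetric_aeval hH, inner_self_eq_norm_sq]

lemma norm_aeval_T_sq_add_norm_aeval_U_sq (hH : H.IsSymmetric) (n : ℤ) (v : E) :
    ‖aeval H (T ℤ (n + 1)) v‖ ^ 2 + ‖aeval H (U ℤ n) v‖ ^ 2 =
      ‖v‖ ^ 2 + ‖H (aeval H (U ℤ n) v)‖ ^ 2 := by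
  have pell := congr_arg (fun p ↦ RCLike.re ⟪aeval H p v, v⟫_𝕜) (T_add_one_sq_add_U_sq ℤ n)
  simpa only [map_add, LinearMap.add_apply, inner_add_left, ← norm_aeval_apply_sq hH, map_one,
    Module.End.one_apply, inner_self_eq_norm_sq, map_mul, aeval_X, Module.End.mul_apply] using pell

lemma norm_aeval_T_apply_le (hH : H.IsSymmetric) (hle : ∀ v, ‖H v‖ ≤ ‖v‖) (n : ℤ) (v : E) :
    ‖aeval H (T ℤ n) v‖ ≤ ‖v‖ := by
  have pell := norm_aeval_T_sq_add_norm_aeval_U_sq hH (n - 1) v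
  have : ‖H (aeval H (U ℤ (n - 1)) v)‖ ^ 2 ≤ ‖aeval H (U ℤ (n - 1)) v‖ ^ 2 := by
    gcongr
    exact hle _
  rw [sub_add_cancel] at pell
  exact le_of_sq_le_sq (by linarith) (norm_nonneg v)

lemma norm_aeval_U_apply_le (hH : H.IsSymmetric) (hle : ∀ v, ‖H v‖ ≤ ‖v‖) (n : ℕ) (v : E) :
    ‖aeval H (U ℤ n) v‖ ≤ (n + 1) * ‖v‖ := by
  induction n with
  | zero => simp
  | succ n ih =>
    push_cast
    calc ‖aeval H (U ℤ (n + 1)) v‖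
        = ‖H (aeval H (U ℤ n) v) + aeval H (T ℤ (n + 1)) v‖ := by simp [U_eq_X_mul_U_add_T]
      _ ≤ ‖aeval H (U ℤ n) v‖ + ‖v‖ :=
        norm_add_le_of_le (hle _) (norm_aeval_T_apply_le hH hle _ v)
      _ ≤ (n + 1 + 1) * ‖v‖ := by linarith

theorem chebyshev_error_accumulation_bound_general
    (hH : H.IsSymmetric) (hle : ∀ v, ‖H v‖ ≤ ‖v‖) {η e : ℕ → E}
    (he0 : e 0 = 0) (he1 : e 1 = η 1)
    (hrec : ∀ k, e (k + 2) = 2 • H (e (k + 1)) - e k + η (k + 2)) :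
    (∀ k : ℕ, ‖e k‖ ≤ ∑ j ∈ Icc 1 k, ((k : ℝ) - j + 1) * ‖η j‖) ∧
      ∀ (δ : ℝ) (k : ℕ), (∀ j ∈ Icc 1 k, ‖η j‖ ≤ δ) → ‖e k‖ ≤ δ * (k * (k + 1)) / 2 := by
  have weighted_bound (k : ℕ) : ‖e k‖ ≤ ∑ j ∈ Icc 1 k, ((k : ℝ) - j + 1) * ‖η j‖ := by
    rw [eq_sum_aeval_U_of_recurrence he0 he1 hrec]
    refine norm_sum_le_of_le _ fun j hj ↦ ?_
    have := norm_aeval_U_apply_le hH hle (k - j) (η j)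
    rwa [Nat.cast_sub (mem_Icc.mp hj).2, Nat.cast_sub (mem_Icc.mp hj).2] at this
  refine ⟨weighted_bound, fun δ k hδ ↦ ?_⟩
  calc ‖e k‖ ≤ ∑ j ∈ Icc 1 k, ((k : ℝ) - j + 1) * ‖η j‖ := weighted_bound k
    _ ≤ ∑ j ∈ Icc 1 k, ((k : ℝ) - j + 1) * δ := by
      gcongr with j hj
      · have : (j : ℝ) ≤ k := mod_cast (mem_Icc.mp hj).2
        linarith
      · exact hδ j hj
    _ = δ * (k * (k + 1)) / 2 := by
      rw [← sum_mul, sum_Icc_one_sub_add_one]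
      ring

end SymmetricContraction

lemma norm_apply_le_of_forall_hasEigenvalue_abs_le {𝕜 E : Type*} [RCLike 𝕜] [NormedAddCommGroup E]
    [InnerProductSpace 𝕜 E] [FiniteDimensional 𝕜 E] {H : Module.End 𝕜 E} (hH : H.IsSymmetric)
    {c : ℝ} (hc : 0 ≤ c) (hspec : ∀ μ : ℝ, H.HasEigenvalue (μ : 𝕜) → |μ| ≤ c) (v : E) :
    ‖H v‖ ≤ c * ‖v‖ := by
  let b := hH.eigenvectorBasis rfl
  refine le_of_sq_le_sq ?_ (by positivity)
  rw [mul_pow, ← b.repr.norm_map, ← b.repr.norm_map v, EuclideanSpace.norm_sq_eq,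
    EuclideanSpace.norm_sq_eq, mul_sum]
  gcongr with i
  rw [hH.eigenvectorBasis_apply_self_apply, norm_mul, mul_pow, RCLike.norm_ofReal]
  gcongr
  exact hspec _ (hH.hasEigenvalue_eigenvalues rfl i)

end

/-- (Worst-case accumulation of local truncation errors.) For `H`
self-adjoint with all eigenvalues in `[-1, 1]` and local errors `η_k`, the error sequence
`e₀ = 0`, `e₁ = η₁`, `e_k = 2H e_{k-1} - e_{k-2} + η_k` (k ≥ 2) satisfies
`‖e_k‖ ≤ Σ_{j=1}^k (k - j + 1)‖η_j‖` for all `k ≥ 1`; in particular, if `‖η_j‖ ≤ δ` for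
all `j`, then `‖e_k‖ ≤ δ k(k+1)/2`. -/
theorem chebyshev_error_accumulation_bound
    {E : Type*} [NormedAddCommGroup E] [InnerProductSpace ℂ E] [FiniteDimensional ℂ E]
    (H : E →ₗ[ℂ] E) (hH : ∀ x y : E, ⟪H x, y⟫_ℂ = ⟪x, H y⟫_ℂ)
    (hspec : ∀ μ : ℝ, Module.End.HasEigenvalue H (μ : ℂ) → μ ∈ Set.Icc (-1 : ℝ) 1)
    (η : ℕ → E) (e : ℕ → E)
    (he0 : e 0 = 0) (he1 : e 1 = η 1)
    (hrec : ∀ k : ℕ, 2 ≤ k → e k = 2 • H (e (k - 1)) - e (k - 2) + η k) :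
    (∀ k : ℕ, 1 ≤ k →
        ‖e k‖ ≤ ∑ j ∈ Finset.Icc 1 k, ((k : ℝ) - (j : ℝ) + 1) * ‖η j‖)
      ∧ ∀ δ : ℝ, (∀ j : ℕ, ‖η j‖ ≤ δ) → ∀ k : ℕ, 1 ≤ k →
          ‖e k‖ ≤ δ * (k * (k + 1)) / 2 := by
  have hle (v : E) : ‖H v‖ ≤ ‖v‖ := by
    simpa using norm_apply_le_of_forall_hasEigenvalue_abs_le hH zero_le_one
      (fun μ hμ ↦ abs_le.mpr (hspec μ hμ)) v
  obtain ⟨weighted_bound, uniform_bound⟩ := chebyshev_error_accumulation_bound_general hH hle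
    he0 he1 fun k ↦ hrec (k + 2) (by omega)
  exact ⟨fun k _ ↦ weighted_bound k, fun δ hδ k _ ↦ uniform_bound δ k fun j _ ↦ hδ j⟩
end

section
/- Let E be a finite-dimensional complex inner product space, H : E → E a self-adjoint linear operator all of whose eigenvalues lie in [-1, 1], and (η_k)_{k≥1} a sequence of vectors in E with a uniform local error bound ‖η_k‖ ≤ δ for all k. Define the error sequence (e_k) by e₀ = 0, e₁ = η₁, and e_k = 2H e_{k-1} - e_{k-2} + η_k for k ≥ 2. Let d ≥ 1 be a natural number and χ > 0 a real number. If δ ≤ 3πχ² / (16 · d(d+1)(d+2)), then the accumulated global error satisfies Σ_{k=1}^d ‖e_k‖ ≤ (π/32) · χ². -/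
open scoped InnerProductSpace

/-!
For a symmetric contraction `H`, the quadratic form `Q(x, y) = ‖x‖² - 2 Re ⟪x, H y⟫ + ‖y‖²` is
conserved by the unperturbed step `(x, y) ↦ (2 H x - y, x)`, as one sees by completing the square
in either variable, while adding `v` to the first variable raises `√Q` by at most `‖v‖`. Hence
`√Q(e (k + 1), e k)` grows at most linearly in `k`; since it dominates `‖e (k + 1)‖ - ‖e k‖`, the
errors grow at most quadratically and their sum at most cubically.
-/

section SymmetricContraction

variable {𝕜 E : Type*} [RCLike 𝕜] [NormedAddCommGroup E] [InnerProductSpace 𝕜 E]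

theorem norm_apply_le_of_abs_eigenvalue_le [FiniteDimensional 𝕜 E] {T : E →ₗ[𝕜] E}
    (hT : T.IsSymmetric) {r : ℝ} (hr : 0 ≤ r)
    (hspec : ∀ μ : ℝ, Module.End.HasEigenvalue T (μ : 𝕜) → |μ| ≤ r) (x : E) :
    ‖T x‖ ≤ r * ‖x‖ := by
  let b := hT.eigenvectorBasis rfl
  let eig := hT.eigenvalues rfl
  have coord_le (i) : ‖b.repr (T x) i‖ ≤ r * ‖b.repr x i‖ := by
    have h_eig : |eig i| ≤ r := hspec _ (hT.hasEigenvalue_eigenvalues rfl i)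
    rw [hT.eigenvectorBasis_apply_self_apply rfl, norm_mul, RCLike.norm_ofReal]
    gcongr
  rw [← b.repr.norm_map (T x), ← b.repr.norm_map x]
  refine (sq_le_sq₀ (norm_nonneg _) (by positivity)).1 ?_
  rw [mul_pow, EuclideanSpace.norm_sq_eq, EuclideanSpace.norm_sq_eq, Finset.mul_sum]
  gcongr with i
  rw [← mul_pow]
  gcongr
  exact coord_le i

/-- The quadratic form on pairs of consecutive terms `(x, y) = (t (k + 1), t k)` that is an
invariant of the Chebyshev recurrence `t (k + 2) = 2 H t (k + 1) - t k`, for `H` symmetric. -/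
noncomputable def chebyshevEnergy (H : E →ₗ[𝕜] E) (x y : E) : ℝ :=
  ‖x‖ ^ 2 - 2 * RCLike.re ⟪x, H y⟫_𝕜 + ‖y‖ ^ 2

variable {H : E →ₗ[𝕜] E}

theorem chebyshevEnergy_comm (hH : H.IsSymmetric) (x y : E) :
    chebyshevEnergy H x y = chebyshevEnergy H y x := by
  have h_re : RCLike.re ⟪x, H y⟫_𝕜 = RCLike.re ⟪y, H x⟫_𝕜 := by rw [← hH, inner_re_symm]
  simp only [chebyshevEnergy, h_re]
  ring

theorem chebyshevEnergy_eq_norm_sub_sq_add (x y : E) :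
    chebyshevEnergy H x y = ‖x - H y‖ ^ 2 + (‖y‖ ^ 2 - ‖H y‖ ^ 2) := by
  rw [chebyshevEnergy, norm_sub_sq (𝕜 := 𝕜)]
  ring

theorem chebyshevEnergy_two_nsmul_sub (hH : H.IsSymmetric) (x y : E) :
    chebyshevEnergy H (2 • H x - y) x = chebyshevEnergy H x y := by
  have h_reflect : 2 • H x - y - H x = -(y - H x) := by abel
  rw [chebyshevEnergy_comm hH x y, chebyshevEnergy_eq_norm_sub_sq_add,
    chebyshevEnergy_eq_norm_sub_sq_add, h_reflect, norm_neg]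

theorem abs_norm_sub_norm_le_sqrt_chebyshevEnergy (hH : ∀ x, ‖H x‖ ≤ ‖x‖) (x y : E) :
    |‖x‖ - ‖y‖| ≤ √(chebyshevEnergy H x y) := by
  refine Real.abs_le_sqrt ?_
  have h_inner : RCLike.re ⟪x, H y⟫_𝕜 ≤ ‖x‖ * ‖y‖ :=
    (re_inner_le_norm x (H y)).trans (by gcongr; exact hH y)
  rw [chebyshevEnergy]
  linarith

theorem sqrt_chebyshevEnergy_add_le (hH : ∀ x, ‖H x‖ ≤ ‖x‖) (x y v : E) :
    √(chebyshevEnergy H (x + v) y) ≤ √(chebyshevEnergy H x y) + ‖v‖ := by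
  have h_defect : 0 ≤ ‖y‖ ^ 2 - ‖H y‖ ^ 2 := sub_nonneg.2 (by gcongr; exact hH y)
  rw [chebyshevEnergy_eq_norm_sub_sq_add, chebyshevEnergy_eq_norm_sub_sq_add]
  set a := ‖x - H y‖
  set s := ‖y‖ ^ 2 - ‖H y‖ ^ 2
  have h_norm : ‖x + v - H y‖ ≤ a + ‖v‖ := by
    rw [add_sub_right_comm]
    exact norm_add_le _ _
  have h_sqrt : a ≤ √(a ^ 2 + s) := Real.le_sqrt_of_sq_le (by linarith)
  refine Real.sqrt_le_iff.2 ⟨by positivity, ?_⟩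
  calc ‖x + v - H y‖ ^ 2 + s
      ≤ (a + ‖v‖) ^ 2 + s := by gcongr
    _ = a ^ 2 + s + 2 * a * ‖v‖ + ‖v‖ ^ 2 := by ring
    _ ≤ √(a ^ 2 + s) ^ 2 + 2 * √(a ^ 2 + s) * ‖v‖ + ‖v‖ ^ 2 := by
        rw [Real.sq_sqrt (by positivity)]
        gcongr
    _ = (√(a ^ 2 + s) + ‖v‖) ^ 2 := by ring

/-- `e` is the error propagated by the Chebyshev recurrence of `H` when the local error `η k` is
committed in computing the `k`-th vector, the initial vector being exact. The value `η 0` does not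
enter. -/
structure IsChebyshevError (H : E →ₗ[𝕜] E) (η e : ℕ → E) : Prop where
  zero : e 0 = 0
  one : e 1 = η 1
  add_two (k : ℕ) : e (k + 2) = 2 • H (e (k + 1)) - e k + η (k + 2)

namespace IsChebyshevError

variable {η e : ℕ → E}

theorem sqrt_chebyshevEnergy_le (he : IsChebyshevError H η e) (hsymm : H.IsSymmetric)
    (hH : ∀ x, ‖H x‖ ≤ ‖x‖) (k : ℕ) :
    √(chebyshevEnergy H (e (k + 1)) (e k)) ≤ ∑ j ∈ Finset.range (k + 1), ‖η (j + 1)‖ := by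
  induction k with
  | zero => simp [chebyshevEnergy, he.zero, he.one]
  | succ k ih =>
    calc √(chebyshevEnergy H (e (k + 2)) (e (k + 1)))
        ≤ √(chebyshevEnergy H (2 • H (e (k + 1)) - e k) (e (k + 1))) + ‖η (k + 2)‖ := by
          rw [he.add_two]
          exact sqrt_chebyshevEnergy_add_le hH _ _ _
      _ = √(chebyshevEnergy H (e (k + 1)) (e k)) + ‖η (k + 2)‖ := by
          rw [chebyshevEnergy_two_nsmul_sub hsymm]
      _ ≤ ∑ j ∈ Finset.range (k + 2), ‖η (j + 1)‖ := by
          rw [Finset.sum_range_succ]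
          gcongr

theorem norm_succ_le (he : IsChebyshevError H η e) (hsymm : H.IsSymmetric)
    (hH : ∀ x, ‖H x‖ ≤ ‖x‖) (k : ℕ) :
    ‖e (k + 1)‖ ≤ ‖e k‖ + ∑ j ∈ Finset.range (k + 1), ‖η (j + 1)‖ :=
  sub_le_iff_le_add'.1 <| (le_abs_self _).trans <|
    (abs_norm_sub_norm_le_sqrt_chebyshevEnergy hH _ _).trans (he.sqrt_chebyshevEnergy_le hsymm hH k)

theorem norm_le (he : IsChebyshevError H η e) (hsymm : H.IsSymmetric) (hH : ∀ x, ‖H x‖ ≤ ‖x‖)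
    {δ : ℝ} (hη : ∀ k, ‖η (k + 1)‖ ≤ δ) (n : ℕ) : ‖e n‖ ≤ n * (n + 1) / 2 * δ := by
  induction n with
  | zero => simp [he.zero]
  | succ n ih =>
    have h_sum : ∑ j ∈ Finset.range (n + 1), ‖η (j + 1)‖ ≤ (n + 1) * δ := by
      simpa using Finset.sum_le_card_nsmul (Finset.range (n + 1)) _ δ fun j _ => hη j
    push_cast
    linarith [he.norm_succ_le hsymm hH n]

theorem sum_norm_le (he : IsChebyshevError H η e) (hsymm : H.IsSymmetric) (hH : ∀ x, ‖H x‖ ≤ ‖x‖)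
    {δ : ℝ} (hη : ∀ k, ‖η (k + 1)‖ ≤ δ) (d : ℕ) :
    ∑ k ∈ Finset.Icc 1 d, ‖e k‖ ≤ d * (d + 1) * (d + 2) / 6 * δ := by
  induction d with
  | zero => simp
  | succ d ih =>
    rw [Finset.sum_Icc_succ_top (by lia)]
    have h_last := he.norm_le hsymm hH hη (d + 1)
    push_cast at h_last ⊢
    linarith

end IsChebyshevError

theorem truncation_error_global_accuracy_general (hsymm : H.IsSymmetric) (hH : ∀ x, ‖H x‖ ≤ ‖x‖)
    {δ : ℝ} {η e : ℕ → E} (hη : ∀ k, ‖η (k + 1)‖ ≤ δ) (he : IsChebyshevError H η e)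
    {d : ℕ} (hd : 1 ≤ d) {χ : ℝ}
    (hδ : δ ≤ 3 * Real.pi * χ ^ 2 / (16 * (d * (d + 1) * (d + 2)))) :
    ∑ k ∈ Finset.Icc 1 d, ‖e k‖ ≤ Real.pi / 32 * χ ^ 2 := by
  have hd_ne : (d : ℝ) ≠ 0 := Nat.cast_ne_zero.2 (Nat.one_le_iff_ne_zero.1 hd)
  calc ∑ k ∈ Finset.Icc 1 d, ‖e k‖
      ≤ d * (d + 1) * (d + 2) / 6 * δ := he.sum_norm_le hsymm hH hη d
    _ ≤ d * (d + 1) * (d + 2) / 6 * (3 * Real.pi * χ ^ 2 / (16 * (d * (d + 1) * (d + 2)))) := by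
        gcongr
    _ = Real.pi / 32 * χ ^ 2 := by
        field_simp [hd_ne]
        ring

end SymmetricContraction

/-- (Precise form of the paper's Theorem 3.) For `H` self-adjoint with
all eigenvalues in `[-1, 1]`, local truncation errors `η_k` uniformly bounded by `δ`, and
error sequence `e₀ = 0`, `e₁ = η₁`, `e_k = 2H e_{k-1} - e_{k-2} + η_k` (k ≥ 2): if
`d ≥ 1`, `χ > 0`, and `δ ≤ 3πχ²/(16 d(d+1)(d+2))`, then
`Σ_{k=1}^d ‖e_k‖ ≤ (π/32)χ²`. -/
theorem truncation_error_global_accuracy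
    {E : Type*} [NormedAddCommGroup E] [InnerProductSpace ℂ E] [FiniteDimensional ℂ E]
    (H : E →ₗ[ℂ] E) (hH : ∀ x y : E, ⟪H x, y⟫_ℂ = ⟪x, H y⟫_ℂ)
    (hspec : ∀ μ : ℝ, Module.End.HasEigenvalue H (μ : ℂ) → μ ∈ Set.Icc (-1 : ℝ) 1)
    (δ : ℝ) (η : ℕ → E) (hη : ∀ k : ℕ, ‖η k‖ ≤ δ)
    (e : ℕ → E)
    (he0 : e 0 = 0) (he1 : e 1 = η 1)
    (hrec : ∀ k : ℕ, 2 ≤ k → e k = 2 • H (e (k - 1)) - e (k - 2) + η k)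
    (d : ℕ) (hd : 1 ≤ d) (χ : ℝ) (hχ : 0 < χ)
    (hδ : δ ≤ 3 * Real.pi * χ ^ 2 / (16 * (d * (d + 1) * (d + 2)))) :
    ∑ k ∈ Finset.Icc 1 d, ‖e k‖ ≤ Real.pi / 32 * χ ^ 2 := by
  have hcontr (x : E) : ‖H x‖ ≤ ‖x‖ := by
    simpa using norm_apply_le_of_abs_eigenvalue_le hH zero_le_one
      (fun μ hμ => abs_le.2 (hspec μ hμ)) x
  exact truncation_error_global_accuracy_general hH hcontr (fun k => hη (k + 1))
    ⟨he0, he1, fun k => hrec (k + 2) (by lia)⟩ hd hδ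
end
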